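/- arXiv:math/9811155 — 5 statements merged into one kernel-verified Lean document; each statement's English description precedes it below -/
import Mathlib

section
/- Let V be a complex vector space, q ∈ ℂ with q ≠ 0, and let s₁, s₂ be invertible linear endomorphisms of V satisfying the braid relation of type B₂, (s₁s₂)² = (s₂s₁)², and the cubic relations (s_i − q)(s_i² − 1) = 0 for i = 1, 2. Let v ∈ V satisfy s₁ v = q v and (s₂ − q)(s₂ − 1) v = 0. Then the smallest subspace of V containing v and invariant under s₁, s₂, s₁⁻¹ and s₂⁻¹ is spanned by the seven vectors v, s₂v, s₁s₂v, s₁⁻¹s₂v, s₂s₁s₂v, s₂s₁⁻¹s₂v, s₁s₂s₁⁻¹s₂v; in particular it is finite-dimensional (of dimension at most 7). -/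
/-- Let `s₁, s₂` be invertible operators on a complex vector space satisfying the
braid relation of type `B₂`, `(s₁s₂)² = (s₂s₁)²`, and the cubic relations
`(sᵢ − q)(sᵢ² − 1) = 0` with `q ≠ 0`. If `s₁ v = q v` and `(s₂ − q)(s₂ − 1) v = 0`, then the
smallest subspace containing `v` and invariant under `s₁, s₂, s₁⁻¹, s₂⁻¹` is spanned by the
seven vectors `v, s₂v, s₁s₂v, s₁⁻¹s₂v, s₂s₁s₂v, s₂s₁⁻¹s₂v, s₁s₂s₁⁻¹s₂v`; in particular it is
finite-dimensional of dimension at most `7`. -/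
theorem stmt_13 {V : Type*} [AddCommGroup V] [Module ℂ V]
    (q : ℂ) (hq : q ≠ 0) (s₁ s₂ : V ≃ₗ[ℂ] V)
    (hbraid : ∀ x : V, s₁ (s₂ (s₁ (s₂ x))) = s₂ (s₁ (s₂ (s₁ x))))
    (hcub₁ : ∀ x : V, s₁ (s₁ (s₁ x)) - q • s₁ (s₁ x) - s₁ x + q • x = 0)
    (hcub₂ : ∀ x : V, s₂ (s₂ (s₂ x)) - q • s₂ (s₂ x) - s₂ x + q • x = 0)
    (v : V)
    (h1 : s₁ v = q • v)
    (h2 : s₂ (s₂ v) - (q + 1) • s₂ v + q • v = 0) :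
    sInf {U : Submodule ℂ V | v ∈ U ∧ ∀ x ∈ U,
        s₁ x ∈ U ∧ s₂ x ∈ U ∧ s₁.symm x ∈ U ∧ s₂.symm x ∈ U} =
      Submodule.span ℂ {v, s₂ v, s₁ (s₂ v), s₁.symm (s₂ v), s₂ (s₁ (s₂ v)),
        s₂ (s₁.symm (s₂ v)), s₁ (s₂ (s₁.symm (s₂ v)))} ∧
    FiniteDimensional ℂ ↥(sInf {U : Submodule ℂ V | v ∈ U ∧ ∀ x ∈ U,
        s₁ x ∈ U ∧ s₂ x ∈ U ∧ s₁.symm x ∈ U ∧ s₂.symm x ∈ U}) ∧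
    Module.finrank ℂ ↥(sInf {U : Submodule ℂ V | v ∈ U ∧ ∀ x ∈ U,
        s₁ x ∈ U ∧ s₂ x ∈ U ∧ s₁.symm x ∈ U ∧ s₂.symm x ∈ U}) ≤ 7 := by
  -- inverse braid relation
  have hinv : ∀ x : V, s₁.symm (s₂.symm (s₁.symm (s₂.symm x)))
      = s₂.symm (s₁.symm (s₂.symm (s₁.symm x))) := by
    intro x
    apply s₂.injective; apply s₁.injective; apply s₂.injective; apply s₁.injective
    rw [hbraid]
    simp
  have hA : ∀ x : V, s₁.symm x = q⁻¹ • (-(s₁ (s₁ x)) + q • s₁ x + x) := by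
    intro x
    have h := hcub₁ (s₁.symm x)
    simp only [LinearEquiv.apply_symm_apply] at h
    rw [eq_inv_smul_iff₀ hq]
    linear_combination (norm := module) h
  have hB : ∀ x : V, s₂.symm x = q⁻¹ • (-(s₂ (s₂ x)) + q • s₂ x + x) := by
    intro x
    have h := hcub₂ (s₂.symm x)
    simp only [LinearEquiv.apply_symm_apply] at h
    rw [eq_inv_smul_iff₀ hq]
    linear_combination (norm := module) h
  have haa : ∀ x : V, s₁ (s₁ x) = q • s₁ x + x - q • s₁.symm x := by
    intro x
    rw [hA x, smul_inv_smul₀ hq]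
    abel
  have hbb : ∀ x : V, s₂ (s₂ x) = q • s₂ x + x - q • s₂.symm x := by
    intro x
    rw [hB x, smul_inv_smul₀ hq]
    abel
  have hbbv : s₂ (s₂ v) = (q + 1) • s₂ v - q • v := by
    linear_combination (norm := module) h2
  have hAv : s₁.symm v = q⁻¹ • v := by
    apply s₁.injective
    rw [LinearEquiv.apply_symm_apply, map_smul, h1, inv_smul_smul₀ hq]
  have hBv : s₂.symm v = q⁻¹ • ((q + 1) • v - s₂ v) := by
    apply s₂.injective
    rw [LinearEquiv.apply_symm_apply, map_smul, map_sub, map_smul, hbbv, eq_inv_smul_iff₀ hq]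
    abel
  -- `a (bab v) = q bab v`
  have habab : s₁ (s₂ (s₁ (s₂ v))) = q • s₂ (s₁ (s₂ v)) := by
    rw [hbraid, h1]; simp only [map_smul]
  have hAbab : s₁.symm (s₂ (s₁ (s₂ v))) = q⁻¹ • s₂ (s₁ (s₂ v)) := by
    apply s₁.injective
    rw [LinearEquiv.apply_symm_apply, map_smul, habab, inv_smul_smul₀ hq]
  -- `B a b a = a b a B`
  have hBaba : ∀ x, s₂.symm (s₁ (s₂ (s₁ x))) = s₁ (s₂ (s₁ (s₂.symm x))) := by
    intro x
    apply s₂.injective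
    rw [← hbraid]
    simp
  -- `b a b A = A b a b`
  have hbabA : ∀ x, s₂ (s₁ (s₂ (s₁.symm x))) = s₁.symm (s₂ (s₁ (s₂ x))) := by
    intro x
    apply s₁.injective
    rw [hbraid]
    simp
  -- `B A b a = a b A B`
  have hBAba : ∀ x, s₂.symm (s₁.symm (s₂ (s₁ x))) = s₁ (s₂ (s₁.symm (s₂.symm x))) := by
    intro x
    apply s₂.injective
    rw [hbabA]
    simp
  have hv : v = s₁ (q⁻¹ • v) := by
    rw [map_smul, h1, inv_smul_smul₀ hq]
  set W : Submodule ℂ V := Submodule.span ℂ {v, s₂ v, s₁ (s₂ v), s₁.symm (s₂ v),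
    s₂ (s₁ (s₂ v)), s₂ (s₁.symm (s₂ v)), s₁ (s₂ (s₁.symm (s₂ v)))} with hW
  have m1 : v ∈ W := Submodule.subset_span (by simp)
  have m2 : s₂ v ∈ W := Submodule.subset_span (by simp)
  have m3 : s₁ (s₂ v) ∈ W := Submodule.subset_span (by simp)
  have m4 : s₁.symm (s₂ v) ∈ W := Submodule.subset_span (by simp)
  have m5 : s₂ (s₁ (s₂ v)) ∈ W := Submodule.subset_span (by simp)
  have m6 : s₂ (s₁.symm (s₂ v)) ∈ W := Submodule.subset_span (by simp)
  have m7 : s₁ (s₂ (s₁.symm (s₂ v))) ∈ W := Submodule.subset_span (by simp)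
  have sm : ∀ (c : ℂ) {x : V}, x ∈ W → c • x ∈ W := fun c _ h => W.smul_mem c h
  have mBv : s₂.symm v ∈ W := by
    rw [hBv]; exact sm _ (W.sub_mem (sm _ m1) m2)
  have maab : s₁ (s₁ (s₂ v)) ∈ W := by
    rw [haa]; exact W.sub_mem (W.add_mem (sm _ m3) m2) (sm _ m4)
  have mbbv : s₂ (s₂ v) ∈ W := by
    rw [hbbv]; exact W.sub_mem (sm _ m2) (sm _ m1)
  have mabab : s₁ (s₂ (s₁ (s₂ v))) ∈ W := by
    rw [habab]; exact sm _ m5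
  have mBab : s₂.symm (s₁ (s₂ v)) ∈ W := by
    have : s₂.symm (s₁ (s₂ v)) = q⁻¹ • s₁ (s₂ (s₁ (s₂.symm v))) := by
      rw [← hBaba, h1]; simp only [map_smul]; rw [inv_smul_smul₀ hq]
    rw [this, hBv]
    simp only [map_smul, map_sub, h1]
    exact sm _ (sm _ (W.sub_mem (sm _ (sm _ m3)) mabab))
  have mbbab : s₂ (s₂ (s₁ (s₂ v))) ∈ W := by
    rw [hbb]; exact W.sub_mem (W.add_mem (sm _ m5) m3) (sm _ mBab)
  have eBAb : s₂.symm (s₁.symm (s₂ v))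
      = q⁻¹ • q⁻¹ • ((q + 1) • q⁻¹ • s₁ (s₂ v) - s₁ (s₂ (s₁.symm (s₂ v)))) := by
    have : s₂.symm (s₁.symm (s₂ v)) = q⁻¹ • s₁ (s₂ (s₁.symm (s₂.symm v))) := by
      rw [← hBAba, h1]; simp only [map_smul]; rw [inv_smul_smul₀ hq]
    rw [this, hBv]
    simp only [map_smul, map_sub, hAv]
  have mBAb : s₂.symm (s₁.symm (s₂ v)) ∈ W := by
    rw [eBAb]
    exact sm _ (sm _ (W.sub_mem (sm _ (sm _ m3)) m7))
  have mbbAb : s₂ (s₂ (s₁.symm (s₂ v))) ∈ W := by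
    rw [hbb]; exact W.sub_mem (W.add_mem (sm _ m6) m4) (sm _ mBAb)
  have mbabAb : s₂ (s₁ (s₂ (s₁.symm (s₂ v)))) ∈ W := by
    rw [hbabA, hbbv]
    simp only [map_smul, map_sub, h1, hAbab]
    exact W.sub_mem (sm _ (sm _ m5)) (sm _ (sm _ m4))
  -- the inverse of the central element
  have hTa : ∀ x, s₁.symm (s₂.symm (s₁.symm (s₂.symm (s₁ x))))
      = s₁ (s₁.symm (s₂.symm (s₁.symm (s₂.symm x)))) := by
    intro x
    rw [hinv]; simp
  have hTb : ∀ x, s₁.symm (s₂.symm (s₁.symm (s₂.symm (s₂ x))))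
      = s₂ (s₁.symm (s₂.symm (s₁.symm (s₂.symm x)))) := by
    intro x
    rw [hinv x]; simp
  have mTv : s₁.symm (s₂.symm (s₁.symm (s₂.symm v))) ∈ W := by
    rw [hinv, hAv]
    simp only [map_smul]
    rw [hBv]
    simp only [map_smul, map_sub, hAv]
    exact sm _ (sm _ (W.sub_mem (sm _ (sm _ mBv)) mBAb))
  have mTbv : s₁.symm (s₂.symm (s₁.symm (s₂.symm (s₂ v)))) ∈ W := by
    rw [hTb, hinv, hAv]
    simp only [map_smul]
    rw [hBv]
    simp only [map_smul, map_sub, hAv, LinearEquiv.apply_symm_apply]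
    exact sm _ (sm _ (W.sub_mem (sm _ (sm _ m1)) m4))
  have mTabv : s₁.symm (s₂.symm (s₁.symm (s₂.symm (s₁ (s₂ v))))) ∈ W := by
    rw [hinv]
    simp only [LinearEquiv.symm_apply_apply, hAv, map_smul]
    exact sm _ mBv
  have mAAb : s₁.symm (s₁.symm (s₂ v)) ∈ W := by
    rw [hA]
    simp only [LinearEquiv.apply_symm_apply]
    exact sm _ (W.add_mem (W.add_mem (W.neg_mem m3) (sm _ m2)) m4)
  have mTAbv : s₁.symm (s₂.symm (s₁.symm (s₂.symm (s₁.symm (s₂ v))))) ∈ W := by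
    have : s₁.symm (s₂.symm (s₁.symm (s₂.symm (s₁.symm (s₂ v)))))
        = s₁.symm (s₁.symm (s₂.symm (s₁.symm v))) := by
      rw [← hinv, LinearEquiv.symm_apply_apply]
    rw [this, hAv]
    simp only [map_smul]
    rw [hBv]
    simp only [map_smul, map_sub, hAv]
    exact sm _ (sm _ (W.sub_mem (sm _ (sm _ (sm _ m1))) mAAb))
  have maBAb : s₁ (s₂.symm (s₁.symm (s₂ v))) ∈ W := by
    have : s₁ (s₂.symm (s₁.symm (s₂ v)))
        = s₁.symm (s₂.symm (s₁.symm (s₂.symm (s₁ (s₁ (s₂ (s₂ v))))))) := by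
      rw [hTa, hTa]; simp
    rw [this, hbbv]
    simp only [map_smul, map_sub, h1]
    rw [haa]
    simp only [map_smul, map_sub, map_add]
    exact W.sub_mem (sm _ (W.sub_mem (W.add_mem (sm _ mTabv) mTbv) (sm _ mTAbv)))
      (sm _ (sm _ (sm _ mTv)))
  have maabAb : s₁ (s₁ (s₂ (s₁.symm (s₂ v)))) ∈ W := by
    have e : s₁ (s₂ (s₁.symm (s₂ v)))
        = (q + 1) • q⁻¹ • s₁ (s₂ v) - q • q • s₂.symm (s₁.symm (s₂ v)) := by
      rw [eBAb, smul_inv_smul₀ hq, smul_inv_smul₀ hq]; abel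
    rw [e]
    simp only [map_smul, map_sub]
    exact W.sub_mem (sm _ (sm _ maab)) (sm _ (sm _ maBAb))
  have ia : ∀ x ∈ W, s₁ x ∈ W := by
    intro x hx
    have : W ≤ W.comap s₁.toLinearMap := by
      conv_lhs => rw [hW]
      rw [Submodule.span_le]
      rintro y (rfl | rfl | rfl | rfl | rfl | rfl | rfl)
      · change s₁ _ ∈ W
        rw [h1]; exact sm _ m1
      · exact m3
      · exact maab
      · change s₁ (s₁.symm _) ∈ W
        rw [LinearEquiv.apply_symm_apply]; exact m2
      · exact mabab
      · exact m7
      · exact maabAb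
    exact this hx
  have ib : ∀ x ∈ W, s₂ x ∈ W := by
    intro x hx
    have : W ≤ W.comap s₂.toLinearMap := by
      conv_lhs => rw [hW]
      rw [Submodule.span_le]
      rintro y (rfl | rfl | rfl | rfl | rfl | rfl | rfl)
      · exact m2
      · exact mbbv
      · exact m5
      · exact m6
      · exact mbbab
      · exact mbbAb
      · exact mbabAb
    exact this hx
  have key : sInf {U : Submodule ℂ V | v ∈ U ∧ ∀ x ∈ U,
        s₁ x ∈ U ∧ s₂ x ∈ U ∧ s₁.symm x ∈ U ∧ s₂.symm x ∈ U} = W := by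
    apply le_antisymm
    · apply sInf_le
      refine ⟨m1, fun x hx => ⟨ia x hx, ib x hx, ?_, ?_⟩⟩
      · rw [hA]
        exact sm _ (W.add_mem (W.add_mem (W.neg_mem (ia _ (ia _ hx))) (sm _ (ia _ hx))) hx)
      · rw [hB]
        exact sm _ (W.add_mem (W.add_mem (W.neg_mem (ib _ (ib _ hx))) (sm _ (ib _ hx))) hx)
    · apply le_sInf
      rintro U ⟨hvU, hU⟩
      have k2 := (hU _ hvU).2.1
      have k4 := (hU _ k2).2.2.1
      have k6 := (hU _ k4).2.1
      rw [hW, Submodule.span_le]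
      rintro y (rfl | rfl | rfl | rfl | rfl | rfl | rfl)
      · exact hvU
      · exact k2
      · exact (hU _ k2).1
      · exact k4
      · exact (hU _ (hU _ k2).1).2.1
      · exact k6
      · exact (hU _ k6).1
  rw [key]
  refine ⟨rfl, ?_, ?_⟩
  · rw [hW]
    exact FiniteDimensional.span_of_finite ℂ (Set.toFinite _)
  · classical
    have h := finrank_span_finset_le_card (R := ℂ) ({v, s₂ v, s₁ (s₂ v), s₁.symm (s₂ v),
      s₂ (s₁ (s₂ v)), s₂ (s₁.symm (s₂ v)), s₁ (s₂ (s₁.symm (s₂ v)))} : Finset V)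
    have h' := h.trans ((Finset.card_insert_le _ _).trans (Nat.succ_le_succ Finset.card_le_six))
    have e : W = Submodule.span ℂ (({v, s₂ v, s₁ (s₂ v), s₁.symm (s₂ v),
      s₂ (s₁ (s₂ v)), s₂ (s₁.symm (s₂ v)), s₁ (s₂ (s₁.symm (s₂ v)))} : Finset V) : Set V) := by
      simp only [hW, Finset.coe_insert, Finset.coe_singleton]
    rw [e]
    exact h'
end

section
/- Let V be a complex vector space and s₁, s₂ invertible linear operators on V such that (s₁s₂)² = (s₂s₁)² and (s₁ − q)(s₁² − 1) = 0, where q ∈ ℂ. Let v ∈ V be a nonzero vector such that s₁ v = q v, (s₂ − q)(s₂ − 1) v = 0, and (s₁s₂)² v = μ v for some constant μ ∈ ℂ. If q⁸ ≠ 1, then μ² ≠ 1. -/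
/-- Let `s₁, s₂` be invertible linear operators on a complex vector space with
`(s₁s₂)² = (s₂s₁)²` and `(s₁ − q)(s₁² − 1) = 0`. If `v ≠ 0` satisfies `s₁ v = q v`,
`(s₂ − q)(s₂ − 1) v = 0` and `(s₁s₂)² v = μ v`, and `q⁸ ≠ 1`, then `μ² ≠ 1`. -/
theorem stmt_14 {V : Type*} [AddCommGroup V] [Module ℂ V]
    (q μ : ℂ) (s₁ s₂ : V ≃ₗ[ℂ] V)
    (hbraid : ∀ x : V, s₁ (s₂ (s₁ (s₂ x))) = s₂ (s₁ (s₂ (s₁ x))))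
    (hcub : ∀ x : V, s₁ (s₁ (s₁ x)) - q • s₁ (s₁ x) - s₁ x + q • x = 0)
    (v : V) (hv : v ≠ 0)
    (h1 : s₁ v = q • v)
    (h2 : s₂ (s₂ v) - (q + 1) • s₂ v + q • v = 0)
    (hμ : s₁ (s₂ (s₁ (s₂ v))) = μ • v)
    (hq : q ^ 8 ≠ 1) :
    μ ^ 2 ≠ 1 := by
  intro hm
  have hq0 : q ≠ 0 := by
    rintro rfl
    rw [zero_smul] at h1
    exact hv (s₁.map_eq_zero_iff.mp h1)
  have hμ0 : μ ≠ 0 := by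
    rintro rfl
    norm_num at hm
  have cancel : ∀ c : ℂ, c • v = 0 → c = 0 := fun c hc =>
    (smul_eq_zero.mp hc).resolve_right hv
  by_cases hdep : ∃ l : ℂ, s₂ v = l • v
  · obtain ⟨l, hl⟩ := hdep
    have e1 : (l - q) * (l - 1) = 0 := by
      apply cancel
      simp only [hl, map_smul] at h2
      rw [← h2]
      module
    have e2 : q * l * q * l - μ = 0 := by
      apply cancel
      simp only [hl, h1, map_smul] at hμ
      rw [sub_smul, ← hμ]
      module
    have e3 : μ = q * l * q * l := (sub_eq_zero.mp e2).symm
    rw [e3] at hm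
    rcases mul_eq_zero.mp e1 with h | h
    · obtain rfl : l = q := sub_eq_zero.mp h
      exact hq (by linear_combination hm)
    · obtain rfl : l = 1 := sub_eq_zero.mp h
      exact hq (by linear_combination (q ^ 4 + 1) * hm)
  · have hind : ∀ c d : ℂ, c • v + d • s₂ v = 0 → c = 0 := by
      intro c d h
      by_cases hd : d = 0
      · subst hd
        exact cancel c (by simpa using h)
      · exfalso
        apply hdep
        refine ⟨-(d⁻¹ * c), ?_⟩
        have : d⁻¹ • (c • v + d • s₂ v) = 0 := by rw [h, smul_zero]
        rw [smul_add, smul_smul, smul_smul, inv_mul_cancel₀ hd, one_smul] at this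
        rw [neg_smul]
        exact eq_neg_of_add_eq_zero_right this
    obtain ⟨b, hb⟩ : ∃ b : ℂ, b * q ^ 2 = -μ := ⟨-μ / q ^ 2, by field_simp⟩
    have hw2 : s₂ (s₂ v) = (q + 1) • s₂ v - q • v := by
      rw [← sub_eq_zero, ← h2]
      module
    have hw : s₁ (s₂ v) = (-(b * (q + 1))) • v + b • s₂ v := by
      apply s₂.injective
      apply s₁.injective
      rw [hμ]
      have : μ = -(b * q ^ 2) := by rw [hb, neg_neg]
      simp only [map_add, map_smul, hw2, map_sub, h1, this]
      module
    have h3 := hcub (s₂ v)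
    simp only [hw, map_add, map_smul, h1] at h3
    have e : -(b * (q + 1)) * (b ^ 2 - 1) = 0 := by
      apply hind _ (b ^ 3 - q * b ^ 2 - b + q)
      rw [← h3]
      module
    have hb0 : b ≠ 0 := by
      rintro rfl
      apply hμ0
      linear_combination hb
    have hq1 : q + 1 ≠ 0 := by
      intro h
      obtain rfl : q = -1 := by linear_combination h
      norm_num at hq
    have hb1 : b ^ 2 - 1 = 0 :=
      (mul_eq_zero.mp e).resolve_left (neg_ne_zero.mpr (mul_ne_zero hb0 hq1))
    have h4 : q ^ 4 = 1 := by
      linear_combination (b * q ^ 2 - μ) * hb + hm - q ^ 4 * hb1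
    exact hq (by linear_combination (q ^ 4 + 1) * h4)
end

section
/- Let V be a complex vector space, q ∈ ℂ with q⁸ ≠ 1, and let s₁, s₂ be invertible linear endomorphisms of V satisfying (s₁s₂)² = (s₂s₁)² and (s_i − q)(s_i² − 1) = 0 for i = 1, 2 (a representation of the cubic Hecke algebra of type B₂). Let W be the dihedral group of order 8 with generators σ₁, σ₂ satisfying σ₁² = σ₂² = 1 and (σ₁σ₂)⁴ = 1, whose eight elements are 1, σ₁, σ₂, σ₁σ₂, σ₂σ₁, σ₁σ₂σ₁, σ₂σ₁σ₂ and σ₁σ₂σ₁σ₂ = σ₂σ₁σ₂σ₁. Define T : W → GL(V) by sending each of these elements to the corresponding alternating product of s₁ and s₂ (T(1) = id, T(σ₁) = s₁, T(σ₂) = s₂, T(σ₁σ₂) = s₁s₂, T(σ₂σ₁) = s₂s₁, T(σ₁σ₂σ₁) = s₁s₂s₁, T(σ₂σ₁σ₂) = s₂s₁s₂, T(σ₁σ₂σ₁σ₂) = s₁s₂s₁s₂; well defined since (s₁s₂)² = (s₂s₁)²). Let K be the space of families (x_w)_{w∈W} of vectors of V such that for i = 1, 2 and every w ∈ W, x_{σ_i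 w} − s_i(x_w) ∈ range(s_i² − 1), and for y ∈ W define i_y : V → K by i_y(v) = (T(w y⁻¹) v)_{w∈W}. Then every element of K is a sum Σ_{y∈W} i_y(v_y) for some vectors v_y ∈ V; that is, K is spanned by the images of the maps i_y, y ∈ W (every representation of the cubic Hecke algebra of type B₂ with q⁸ ≠ 1 is good). -/
/-- The operators `T(w)` for `w` in the dihedral group of order 8 (the Weyl group of type
`B₂`, with simple reflections `σ₁ = sr 0`, `σ₂ = sr 1`): each of the eight elements is sent
to the corresponding alternating product of `s₁` and `s₂`. -/
noncomputable def TB2 {k V : Type*} [Field k] [AddCommGroup V] [Module k V]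
    (s₁ s₂ : V →ₗ[k] V) (w : DihedralGroup 4) : V →ₗ[k] V :=
  if w = 1 then LinearMap.id
  else if w = DihedralGroup.sr 0 then s₁
  else if w = DihedralGroup.sr 1 then s₂
  else if w = DihedralGroup.sr 0 * DihedralGroup.sr 1 then s₁ ∘ₗ s₂
  else if w = DihedralGroup.sr 1 * DihedralGroup.sr 0 then s₂ ∘ₗ s₁
  else if w = DihedralGroup.sr 0 * DihedralGroup.sr 1 * DihedralGroup.sr 0 then s₁ ∘ₗ s₂ ∘ₗ s₁
  else if w = DihedralGroup.sr 1 * DihedralGroup.sr 0 * DihedralGroup.sr 1 then s₂ ∘ₗ s₁ ∘ₗ s₂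
  else s₁ ∘ₗ s₂ ∘ₗ s₁ ∘ₗ s₂



namespace CubicB2

variable {R V : Type*} [CommRing R] [AddCommGroup V] [Module R V]

/-- The working hypotheses: `s₁, s₂` with the projections `P₁, P₂` on the `q`-eigenspaces. -/
structure Su (q qi k ki r ri : R) (s1 s2 P1 P2 : V →ₗ[R] V) : Prop where
  hq : q * qi = 1
  hk : k = q - qi
  hki : k * ki = 1
  hr : r * ri = 1
  sq1 : ∀ v, s1 (s1 v) = v + (q * k) • P1 v
  sq2 : ∀ v, s2 (s2 v) = v + (q * k) • P2 v
  e1 : ∀ v, s1 (P1 v) = q • P1 v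
  e2 : ∀ v, s2 (P2 v) = q • P2 v
  f1 : ∀ v, P1 (s1 v) = q • P1 v
  f2 : ∀ v, P2 (s2 v) = q • P2 v
  d1 : ∀ v, s1 (s2 (s1 (s2 v))) = (q ^ 2 * r) • v
  d2 : ∀ v, s2 (s1 (s2 (s1 v))) = (q ^ 2 * r) • v

namespace Su

variable {q qi k ki r ri : R} {s1 s2 P1 P2 : V →ₗ[R] V}

theorem swap (h : Su q qi k ki r ri s1 s2 P1 P2) : Su q qi k ki r ri s2 s1 P2 P1 :=
  ⟨h.hq, h.hk, h.hki, h.hr, h.sq2, h.sq1, h.e2, h.e1, h.f2, h.f1, h.d2, h.d1⟩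

theorem cancel (h : Su q qi k ki r ri s1 s2 P1 P2) {x y : V} (e : (q * k) • x = (q * k) • y) :
    x = y := by
  have h1 := h.hq
  have h2 := h.hki
  have := congrArg (fun z => (qi * ki) • z) e
  simp only [smul_smul] at this
  have e1 : qi * ki * (q * k) = 1 := by linear_combination ki * k * h1 + h2
  simpa [e1] using this

theorem cancelq (h : Su q qi k ki r ri s1 s2 P1 P2) {x y : V} (e : q • x = q • y) :
    x = y := by
  have h1 := h.hq
  have := congrArg (fun z => qi • z) e
  simp only [smul_smul] at this
  have e1 : qi * q = 1 := by linear_combination h1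
  simpa [e1] using this

theorem fix (h : Su q qi k ki r ri s1 s2 P1 P2) {v : V} (e : s1 v = q • v) : P1 v = v := by
  apply h.cancel
  have a := h.sq1 v
  rw [e, map_smul, e] at a
  have h1 := h.hq
  have h2 := h.hk
  linear_combination (norm := skip) - a
  match_scalars <;> grind

/-- `P₁ s₂ s₁ s₂ = q r P₁` -/
theorem lA (h : Su q qi k ki r ri s1 s2 P1 P2) (v : V) :
    P1 (s2 (s1 (s2 v))) = (q * r) • P1 v := by
  apply h.cancelq
  rw [← h.f1, h.d1, map_smul]
  module

theorem lB (h : Su q qi k ki r ri s1 s2 P1 P2) (w : V) :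
    P1 (s2 (s1 w)) = (q * r) • P1 (s2 w) - (q * r * k) • P1 (P2 w) := by
  have e : w = s2 (s2 w - k • P2 w) := by
    rw [map_sub, h.sq2, map_smul, h.e2]; module
  conv_lhs => rw [e]
  rw [h.lA, map_sub, map_smul]
  module

theorem l1 (h : Su q qi k ki r ri s1 s2 P1 P2) {v : V} (e : s2 v = q • v) :
    P1 (s2 (s1 v)) = r • P1 v := by
  rw [h.lB, e, h.swap.fix e, map_smul]
  have h1 := h.hq
  have h2 := h.hk
  match_scalars
  grind

theorem lSM (h : Su q qi k ki r ri s1 s2 P1 P2) {v : V} (e : s2 v = q • v) :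
    P1 (s2 (P1 v)) = (ki * (r ^ 2 - 1)) • P1 v - r • P1 (P2 (s1 v)) := by
  apply h.cancel
  have a := congrArg (fun z => P1 (s2 z)) (h.sq1 v)
  simp only [map_add, map_smul] at a
  rw [h.lB, h.l1 e, e, map_smul] at a
  have h1 := h.hq
  have h3 := h.hki
  linear_combination (norm := skip) - a
  match_scalars <;> grind

theorem lSS (h : Su q qi k ki r ri s1 s2 P1 P2) {u : V} (e : s1 u = q • u) :
    P1 (s2 (P1 (s2 u))) = (ki * qi * (q ^ 2 * r ^ 2 - 1)) • u - (r ^ 2 + 1) • P1 (P2 u) := by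
  apply h.cancel
  have a := congrArg (fun z => P1 (s2 z)) (h.sq1 (s2 u))
  simp only [map_add, map_smul] at a
  rw [h.lB, h.lA, h.swap.l1 e, h.sq2, map_add, map_smul, map_smul, h.fix e] at a
  have h1 := h.hq
  have h3 := h.hki
  linear_combination (norm := skip) - a
  match_scalars <;> grind

/-- An exchange identity on the `q`-eigenspace of `s2`. -/
theorem lSn (h : Su q qi k ki r ri s1 s2 P1 P2) {v : V} (e : s2 v = q • v) :
    P2 (s1 (P2 (P1 v))) = (- ki * (r ^ 2 - 1) * (r - 1)) • P2 (P1 v)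
      + r ^ 2 • P2 (P1 (P2 (s1 v))) := by
  have a := h.swap.lSM (h.e1 v)
  have b := congrArg (fun z => P2 z) (h.lSM e)
  simp only [map_sub, map_smul] at b
  rw [a, b]
  module

end Su
end CubicB2

namespace CubicB2

/-- Nonvanishing of the elimination polynomials at a point of the residue field. -/
theorem fieldcase {L : Type*} [Field L] (q qi k ki r ri θ T j K ρ g c1 A C pp an aS ab x y : L)
    (h2 : (2 : L) ≠ 0) (h19 : (19 : L) ≠ 0)
    (hq : q * qi = 1) (hk : k = q - qi) (hki : k * ki = 1) (hr : r * ri = 1)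
    (hθ : θ = ki * (q * r - qi * ri)) (hT : T = ki * (q ^ 2 * r ^ 2 - 1))
    (hj : j = ki * qi * (q ^ 2 * r ^ 2 - 1)) (hK : K = r ^ 2 + 1) (hρ : ρ = ki * (r - 1))
    (hg : g = K * (r ^ 2 - 1)) (hc1 : c1 = K * (T + ρ) - k * (j - ρ ^ 2))
    (hpp : pp = - (r ^ 2 - 1) * (r - 1))
    (hA : A = T + qi + (1 - ri ^ 2) * k) (hC : C = qi + (1 - ri ^ 2) * k)
    (haS : aS = 1 - A * q - ri ^ 2 * pp + q * (r ^ 2 - 1) * T)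
    (hab : ab = A - C * j + q * (r ^ 2 - 1) * j - aS * T)
    (han : an = A * q * k + C * K + q * pp - q * (r ^ 2 - 1) * K + aS * k)
    (hx : x = k * (A * q + ri ^ 2 * pp) + q * an * (T + qi))
    (hy : y = k * ab + q * an * (1 + qi * T))
    (z1 : r * θ + ri = 0)
    (z2 : g * c1 * (j - T ^ 2) = 0)
    (z3 : g * c1 * ((T + qi) * q * (θ ^ 2 - 1) + θ * (θ + q ^ 2 * r) * (1 + qi * T)) = 0)
    (z4 : θ * (θ + q ^ 2 * r) * y + x * q * (θ ^ 2 - 1) = 0) : q ^ 8 = 1 := by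
  have hq0 : q ≠ 0 := left_ne_zero_of_mul_eq_one hq
  have hr0 : r ≠ 0 := left_ne_zero_of_mul_eq_one hr
  have hk0 : k ≠ 0 := left_ne_zero_of_mul_eq_one hki
  have kθ : k * q * r * θ = q ^ 2 * r ^ 2 - 1 := by
    rw [hθ]; linear_combination (q^2*r^2 - 1) * hki - k*ki*r*ri*hq - k*ki*hr
  have kT : k * T = q ^ 2 * r ^ 2 - 1 := by
    rw [hT]; linear_combination (q^2*r^2 - 1) * hki
  have kq : k * q = q ^ 2 - 1 := by rw [hk]; linear_combination -hq
  have p1 : (r + 1) * (q ^ 2 * (r ^ 2 - r + 1) - 1) = 0 := by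
    have : k * q * r * (r * θ + ri) = 0 := by rw [z1]; ring
    linear_combination this - r * kθ - k * q * hr - kq
  by_cases hr1 : r = -1
  · subst hr1
    have hri : ri = -1 := by linear_combination -hr
    subst hri
    have t1 : θ = -1 := by
      have : k * q * (θ + 1) = 0 := by linear_combination -kθ + kq
      have := (mul_eq_zero.mp this).resolve_left (mul_ne_zero hk0 hq0)
      linear_combination this
    have t2 : T = q := by
      have : k * (T - q) = 0 := by linear_combination kT - kq
      have := (mul_eq_zero.mp this).resolve_left hk0
      linear_combination this
    have t3 : j = 1 := by
      have : j = qi * T := by rw [hj, hT]; ring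
      rw [this, t2]; linear_combination hq
    have hK' : K = 2 := by rw [hK]; ring
    have hpp' : pp = 0 := by rw [hpp]; ring
    have hA' : A = q + qi := by rw [hA, t2]; ring
    have hC' : C = qi := by rw [hC]; ring
    have haS' : aS = - q ^ 2 := by rw [haS, hA', hpp']; linear_combination -hq
    have hab' : ab = q + q ^ 3 := by rw [hab, hA', hC', haS', t3, t2]; ring
    have han' : an = q + qi := by rw [han, hA', hC', haS', hK', hpp']; linear_combination k * hq + hk
    have hy' : y = (q ^ 2 + 1) ^ 2 := by rw [hy, hab', han', t2]; linear_combination (1+q^2)*kq + (q^2+q*qi+2)*hq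
    have : (q ^ 2 + 1) ^ 3 = 0 := by
      rw [t1, hy'] at z4; linear_combination z4
    have := pow_eq_zero_iff (n := 3) (by norm_num) |>.mp this
    linear_combination (q ^ 2 - 1) * (q ^ 4 + 1) * this
  have hm : q ^ 2 * (r ^ 2 - r + 1) = 1 := by
    have := (mul_eq_zero.mp p1).resolve_left (fun h => hr1 (by linear_combination h))
    linear_combination this
  by_contra h8
  have n1 : r ^ 2 + 1 ≠ 0 := by
    intro h; apply h8
    have : q ^ 2 * r = -1 := by linear_combination q ^ 2 * h - hm
    have h4 : q ^ 4 = -1 := by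
      linear_combination q ^ 4 * h - (q ^ 2 * r - 1) * this
    linear_combination (q ^ 4 - 1) * h4
  have n2 : r ^ 2 - 1 ≠ 0 := by
    intro h
    have : (r + 1) * (r - 1) = 0 := by linear_combination h
    rcases mul_eq_zero.mp this with h' | h'
    · exact hr1 (by linear_combination h')
    · apply h8
      have hr1 : r = 1 := by linear_combination h'
      subst hr1
      have : q ^ 2 = 1 := by linear_combination hm
      linear_combination (q ^ 6 + q ^ 4 + q ^ 2 + 1) * this
  have n3 : q ^ 2 * r ^ 3 - 1 ≠ 0 := by
    intro h
    apply h8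
    have : r = q ^ 2 := by linear_combination h - (r + 1) * hm
    rw [this] at h
    linear_combination h
  have n4 : q ^ 2 * r + 1 ≠ 0 := by
    intro h
    apply n1
    have : q ^ 2 * (r ^ 2 + 1) = 0 := by linear_combination hm + h
    exact (mul_eq_zero.mp this).resolve_left (pow_ne_zero _ hq0)
  have kρ : k * ρ = r - 1 := by rw [hρ]; linear_combination (r-1)*hki
  have kj : k * q * j = q ^ 2 * r ^ 2 - 1 := by
    rw [hj]; linear_combination (q^2*r^2-1)*(k*ki*hq+hki)
  have n5 : c1 ≠ 0 := by
    intro h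
    have e : k * q ^ 2 * c1 = (q ^ 2 * r ^ 3 - 1) * (q ^ 2 * r + 1) := by
      have : k * q ^ 2 * c1 = q ^ 2 * K * (k * T + k * ρ) - (k * q) * (k * q * j)
        + q ^ 2 * (k * ρ) ^ 2 := by
        rw [hc1]; ring
      rw [this, kT, kρ, kj, kq, hK]; ring
    rw [h, mul_zero] at e
    exact mul_ne_zero n3 n4 e.symm
  have ng : g * c1 ≠ 0 := by
    rw [hg, hK]; exact mul_ne_zero (mul_ne_zero n1 n2) n5
  have w2 := (mul_eq_zero.mp z2).resolve_left ng
  have w3 := (mul_eq_zero.mp z3).resolve_left ng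
  have nr : r - 1 ≠ 0 := fun h => n2 (by linear_combination (r + 1) * h)
  have c : r ^ 3 - r ^ 2 + r + 1 = 0 := by
    have a1 : (q ^ 2 - 1) * (q ^ 2 * r ^ 2 - 1) - q ^ 2 * (q ^ 2 * r ^ 2 - 1) ^ 2 = 0 := by
      rw [← kT]
      have : (k * q) * (k * q * j) - q ^ 2 * (k * T) ^ 2 = 0 := by
        linear_combination q ^ 2 * k ^ 2 * w2
      rw [kj, kq, ← kT] at this
      exact this
    have a2 : (r - 1) ^ 2 * (r ^ 3 - r ^ 2 + r + 1) = 0 := by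
      have a0 : (r ^ 2 - r + 1) * (q ^ 2 * (r ^ 2 - r + 1) - (r ^ 2 - r + 1))
          * (q ^ 2 * (r ^ 2 - r + 1) * r ^ 2 - (r ^ 2 - r + 1))
          - q ^ 2 * (r ^ 2 - r + 1) * (q ^ 2 * (r ^ 2 - r + 1) * r ^ 2 - (r ^ 2 - r + 1)) ^ 2
          = 0 := by
        linear_combination (r ^ 2 - r + 1) ^ 3 * a1
      rw [hm] at a0
      linear_combination - a0
    exact (mul_eq_zero.mp a2).resolve_left (pow_ne_zero _ nr)
  have hQ : q ^ 2 = - r := by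
    have : r * (r ^ 2 - r + 1) = -1 := by linear_combination c
    linear_combination q ^ 2 * this - r * hm
  have hθ' : r ^ 2 * θ = -1 := by
    have : (r + 1) * (r ^ 2 * θ + 1) = 0 := by
      rw [kq, hQ] at kθ
      linear_combination - r * kθ + (r + 1) * c
    have := (mul_eq_zero.mp this).resolve_left (fun h => hr1 (by linear_combination h))
    linear_combination this
  have hT' : T = q * r * θ := by
    rw [hT, hθ]; linear_combination ki * (r * ri * hq + hr)
  have hfin : 2 * r * (r + 3) = 0 := by
    have a3 : (q ^ 2 * r * θ + 1) * (θ ^ 2 - 1) + θ * (θ + q ^ 2 * r) * (1 + r * θ) = 0 := by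
      rw [hT'] at w3
      linear_combination w3 - (θ ^ 2 - 1 + θ * (θ + q ^ 2 * r) * r * θ) * hq
    rw [hQ] at a3
    have a0 : (- (r ^ 2 * θ) + 1) * (r * (r ^ 2 * θ) ^ 2 - r ^ 5)
        + (r ^ 2 * θ) * (r ^ 2 * θ - r ^ 4) * (r + r ^ 2 * θ) = 0 := by
      linear_combination r ^ 5 * a3
    rw [hθ'] at a0
    have a4 : 2 * r - 2 * r ^ 5 + (1 + r ^ 4) * (r - 1) = 0 := by
      linear_combination a0
    linear_combination a4 + (r ^ 2 + 2 * r + 1) * c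
  have hr3 : r + 3 = 0 := (mul_eq_zero.mp hfin).resolve_left (mul_ne_zero h2 hr0)
  have hr3' : r = -3 := by linear_combination hr3
  rw [hr3'] at c
  have : (2 : L) * 19 = 0 := by linear_combination -c
  exact mul_ne_zero h2 h19 this

end CubicB2

namespace CubicB2

section
variable {R V : Type*} [CommRing R] [AddCommGroup V] [Module R V]

theorem notmem_field {q qi k ki r ri : R}
    (hq : q * qi = 1) (hk : k = q - qi) (hki : k * ki = 1) (hr : r * ri = 1)
    (h8 : IsUnit (q ^ 8 - 1)) (h2 : IsUnit (2 : R)) (h19 : IsUnit (19 : R))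
    (B : Submodule R V) (b : V)
    (θ T j K ρ g c1 A C pp an aS ab x y : R)
    (hθ : θ = ki * (q * r - qi * ri)) (hT : T = ki * (q ^ 2 * r ^ 2 - 1))
    (hj : j = ki * qi * (q ^ 2 * r ^ 2 - 1)) (hK : K = r ^ 2 + 1) (hρ : ρ = ki * (r - 1))
    (hg : g = K * (r ^ 2 - 1)) (hc1 : c1 = K * (T + ρ) - k * (j - ρ ^ 2))
    (hpp : pp = - (r ^ 2 - 1) * (r - 1))
    (hA : A = T + qi + (1 - ri ^ 2) * k) (hC : C = qi + (1 - ri ^ 2) * k)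
    (haS : aS = 1 - A * q - ri ^ 2 * pp + q * (r ^ 2 - 1) * T)
    (hab : ab = A - C * j + q * (r ^ 2 - 1) * j - aS * T)
    (han : an = A * q * k + C * K + q * pp - q * (r ^ 2 - 1) * K + aS * k)
    (hx : x = k * (A * q + ri ^ 2 * pp) + q * an * (T + qi))
    (hy : y = k * ab + q * an * (1 + qi * T))
    (z1 : (r * θ + ri) • b ∈ B)
    (z2 : (g * c1 * (j - T ^ 2)) • b ∈ B)
    (z3 : (g * c1 * ((T + qi) * q * (θ ^ 2 - 1) + θ * (θ + q ^ 2 * r) * (1 + qi * T))) • b ∈ B)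
    (z4 : (θ * (θ + q ^ 2 * r) * y + x * q * (θ ^ 2 - 1)) • b ∈ B) : b ∈ B := by
  by_contra hb
  let I : Ideal R := B.comap (LinearMap.toSpanSingleton R V b)
  have hI : I ≠ ⊤ := by
    intro e
    have : (1 : R) ∈ I := by rw [e]; trivial
    apply hb
    simpa [I] using this
  obtain ⟨M, hM, hIM⟩ := Ideal.exists_le_maximal I hI
  let _ := Ideal.Quotient.field M
  let φ := Ideal.Quotient.mk M
  have key : ∀ f : R, f • b ∈ B → φ f = 0 := by
    intro f hf
    exact Ideal.Quotient.eq_zero_iff_mem.mpr (hIM (by simpa [I] using hf))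
  have u8 : (φ q) ^ 8 - 1 ≠ 0 := by
    have := (h8.map φ).ne_zero
    simpa using this
  have u2 : (2 : R ⧸ M) ≠ 0 := by
    have := (h2.map φ).ne_zero
    rwa [map_ofNat] at this
  have u19 : (19 : R ⧸ M) ≠ 0 := by
    have := (h19.map φ).ne_zero
    rwa [map_ofNat] at this
  apply u8
  rw [sub_eq_zero]
  have z1 := key _ z1
  have z2 := key _ z2
  have z3 := key _ z3
  have z4 := key _ z4
  simp only [map_add, map_mul, map_sub, map_pow, map_one] at z1 z2 z3 z4
  exact fieldcase (φ q) (φ qi) (φ k) (φ ki) (φ r) (φ ri) (φ θ) (φ T) (φ j) (φ K) (φ ρ) (φ g)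
    (φ c1) (φ A) (φ C) (φ pp) (φ an) (φ aS) (φ ab) (φ x) (φ y) u2 u19
    (by rw [← map_mul, hq, map_one]) (by rw [hk, map_sub]) (by rw [← map_mul, hki, map_one])
    (by rw [← map_mul, hr, map_one]) (by rw [hθ]; simp) (by rw [hT]; simp) (by rw [hj]; simp)
    (by rw [hK]; simp) (by rw [hρ]; simp) (by rw [hg]; simp) (by rw [hc1]; simp)
    (by rw [hpp]; simp) (by rw [hA]; simp) (by rw [hC]; simp) (by rw [haS]; simp)
    (by rw [hab]; simp) (by rw [han]; simp) (by rw [hx]; simp) (by rw [hy]; simp) z1 z2 z3 z4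

end

namespace Su

variable {R V : Type*} [CommRing R] [AddCommGroup V] [Module R V]
variable {q qi k ki r ri : R} {s1 s2 P1 P2 : V →ₗ[R] V}

/-- Elimination inside the submodule `B`. -/
theorem elim (h : Su q qi k ki r ri s1 s2 P1 P2) (θ : R) (hθ : θ = ki * (q * r - qi * ri))
    (h8 : IsUnit (q ^ 8 - 1)) (h2 : IsUnit (2 : R)) (h19 : IsUnit (19 : R))
    (B : Submodule R V) (T : R) (hT : T = ki * (q ^ 2 * r ^ 2 - 1))
    (hF : ∀ v, s2 v = q • v → T • v + P2 (s1 v) - k • P2 (P1 v) ∈ B)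
    (b β : V) (hb : s2 b = q • b) (hβ : s2 β = q • β)
    (hn : P2 (P1 β) = q • P2 (P1 b) + β - P2 (s1 b))
    (hS : P2 (s1 β) = b + (q * k) • P2 (P1 b) + q • β - q • P2 (s1 b))
    (hz1 : (r * θ + ri) • b ∈ B)
    (hE2 : (- (θ * (θ + q ^ 2 * r))) • β + (q * (θ ^ 2 - 1)) • b ∈ B) : b ∈ B := by
  obtain ⟨j, hj⟩ : ∃ j, j = ki * qi * (q ^ 2 * r ^ 2 - 1) := ⟨_, rfl⟩
  obtain ⟨K, hK⟩ : ∃ K, K = r ^ 2 + 1 := ⟨_, rfl⟩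
  obtain ⟨ρ, hρ⟩ : ∃ x, x = ki * (r - 1) := ⟨_, rfl⟩
  obtain ⟨g, hg⟩ : ∃ x, x = K * (r ^ 2 - 1) := ⟨_, rfl⟩
  obtain ⟨c1, hc1⟩ : ∃ x, x = K * (T + ρ) - k * (j - ρ ^ 2) := ⟨_, rfl⟩
  obtain ⟨pp, hpp⟩ : ∃ x, x = - (r ^ 2 - 1) * (r - 1) := ⟨_, rfl⟩
  obtain ⟨A, hA⟩ : ∃ x, x = T + qi + (1 - ri ^ 2) * k := ⟨_, rfl⟩
  obtain ⟨C, hC⟩ : ∃ x, x = qi + (1 - ri ^ 2) * k := ⟨_, rfl⟩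
  obtain ⟨aS, haS⟩ : ∃ x, x = 1 - A * q - ri ^ 2 * pp + q * (r ^ 2 - 1) * T := ⟨_, rfl⟩
  obtain ⟨ab, hab⟩ : ∃ x, x = A - C * j + q * (r ^ 2 - 1) * j - aS * T := ⟨_, rfl⟩
  obtain ⟨an, han⟩ : ∃ x, x = A * q * k + C * K + q * pp - q * (r ^ 2 - 1) * K + aS * k :=
    ⟨_, rfl⟩
  obtain ⟨x, hx⟩ : ∃ x, x = k * (A * q + ri ^ 2 * pp) + q * an * (T + qi) := ⟨_, rfl⟩
  obtain ⟨y, hy⟩ : ∃ x, x = k * ab + q * an * (1 + qi * T) := ⟨_, rfl⟩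
  have hq := h.hq
  have hk := h.hk
  have hki := h.hki
  have hr := h.hr
  have SS := h.swap.lSS hb
  have SSS := h.swap.lSS (h.e2 (s1 b))
  have SSn := h.swap.lSS (h.e2 (P1 b))
  have Sn := h.lSn hb
  have Snβ := h.lSn hβ
  rw [← hj, ← hK] at SS SSS SSn
  have kp : k * (- ki * (r ^ 2 - 1) * (r - 1)) = pp := by
    rw [hpp]; linear_combination (- (r ^ 2 - 1) * (r - 1)) * hki
  -- relations after multiplying by `g`
  have hKl : K • P2 (s1 (P2 (P1 b))) = K • P2 (P1 (P2 (s1 b))) := by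
    rw [SS] at SSS
    simp only [map_sub, map_smul] at SSS
    linear_combination (norm := module) - SSS
  have gm : g • P2 (P1 (P2 (s1 b))) = (g * ρ) • P2 (P1 b) := by
    rw [Sn] at hKl
    rw [hg, hρ]
    linear_combination (norm := module) hKl
  have gl : g • P2 (s1 (P2 (P1 b))) = (g * ρ) • P2 (P1 b) := by
    rw [← gm, hg, mul_comm K, mul_smul, mul_smul, hKl]
  have gn : (g * K) • P2 (P1 (P2 (P1 b))) = (g * (j - ρ ^ 2)) • P2 (P1 b) := by
    have e := congrArg (fun z => P2 (s1 z)) gl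
    simp only [map_smul, SSn] at e
    linear_combination (norm := module) - e - ρ • gl
  -- the five members
  have fb := hF b hb
  have fβ : (T + qi) • β + b - qi • P2 (s1 b) ∈ B := by
    convert hF β hβ using 1
    rw [hS, hn, hk]
    module
  have fS : T • P2 (s1 b) + j • b - K • P2 (P1 b) - k • P2 (P1 (P2 (s1 b))) ∈ B := by
    convert hF _ (h.e2 (s1 b)) using 1
    rw [SS]
    module
  have fn : (g * c1) • P2 (P1 b) ∈ B := by
    convert B.smul_mem (g * K) (hF _ (h.e2 (P1 b))) using 1
    rw [hc1]
    linear_combination (norm := module) - K • gl + k • gn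
  have fSβ : (A * q + ri ^ 2 * pp) • β + (A - C * j) • b + (1 - A * q - ri ^ 2 * pp) • P2 (s1 b)
      + (A * q * k + C * K + q * pp) • P2 (P1 b)
      + (q * (r ^ 2 - 1) * k) • P2 (P1 (P2 (s1 b))) ∈ B := by
    convert hF _ (h.e2 (s1 β)) using 1
    have e1 : k • P2 (P1 (P2 (s1 β))) = (ri ^ 2 * k) • P2 (s1 (P2 (P1 β)))
        - (ri ^ 2 * pp) • P2 (P1 β) := by
      rw [Snβ, ← kp]
      have : ri ^ 2 * r ^ 2 = 1 := by linear_combination (r * ri + 1) * hr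
      match_scalars
      · linear_combination (-k) * this
      · ring
    have e2 : P2 (s1 (P2 (s1 β))) = P2 (s1 b) + (q * k) • P2 (s1 (P2 (P1 b)))
        + q • P2 (s1 β) - q • P2 (s1 (P2 (s1 b))) := by
      rw [hS]; simp only [map_add, map_sub, map_smul]; rw [hS]
    have e3 : P2 (s1 (P2 (P1 β))) = q • P2 (s1 (P2 (P1 b))) + P2 (s1 β)
        - P2 (s1 (P2 (s1 b))) := by
      rw [hn]; simp only [map_add, map_sub, map_smul]
    have kl : k • P2 (s1 (P2 (P1 b))) = pp • P2 (P1 b)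
        + (k * r ^ 2) • P2 (P1 (P2 (s1 b))) := by
      rw [Sn, ← kp]; module
    rw [e1, e3, e2, SS, hn, hS]
    linear_combination (norm := skip) (ri ^ 2 * q - q) • kl
    have rr : ri ^ 2 * r ^ 2 = 1 := by linear_combination (r * ri + 1) * hr
    subst hA hC
    match_scalars <;> clear * - hk hq rr hr hki
    · linear_combination q * hk
    · linear_combination (1 - j) * hk
    · linear_combination (- q) * hk
    · linear_combination (q * k + K) * hk
    · linear_combination q * k * rr
    · ring
  have f4 : x • β + y • b ∈ B := by
    convert B.add_mem (B.smul_mem k (B.sub_mem (B.add_mem fSβ (B.smul_mem (q * (r ^ 2 - 1)) fS))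
      (B.smul_mem aS fb))) (B.smul_mem (q * an) (B.add_mem fβ (B.smul_mem qi fb))) using 1
    rw [hx, hy, hab]
    match_scalars
    · ring
    · ring
    · rw [haS]; ring
    · linear_combination k * han + an * k * hq
    · ring
  have fT : (g * c1) • (P2 (s1 b) + T • b) ∈ B := by
    convert B.add_mem (B.smul_mem (g * c1) fb) (B.smul_mem k fn) using 1
    module
  refine notmem_field hq hk hki hr h8 h2 h19 B b θ T j K ρ g c1 A C pp an aS ab x y hθ hT hj hK hρ
    hg hc1 hpp hA hC haS hab han hx hy hz1 ?_ ?_ ?_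
  · convert B.add_mem (B.sub_mem (B.smul_mem (g * c1) fS) (B.smul_mem T fT))
      (B.smul_mem (K + k * ρ) fn) using 1
    linear_combination (norm := module) (c1 * k) • gm
  · convert B.add_mem (B.smul_mem (θ * (θ + q ^ 2 * r)) (B.add_mem (B.smul_mem (g * c1) fβ)
      (B.smul_mem qi fT))) (B.smul_mem (g * c1 * (T + qi)) hE2) using 1
    module
  · convert B.add_mem (B.smul_mem (θ * (θ + q ^ 2 * r)) f4) (B.smul_mem x hE2) using 1
    module
end Su
end CubicB2

namespace CubicB2

section
variable {R V : Type*} [CommRing R] [AddCommGroup V] [Module R V]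

/-- The constraints on the quadruples `(a, b, α, β)`. -/
structure Con (q : R) (s1 s2 : V →ₗ[R] V) (a b α β : V) : Prop where
  ha : s1 a = q • a
  hb : s2 b = q • b
  hα : s1 α = q • α
  hβ : s2 β = q • β
  hc : s2 a + β = s1 b + α

theorem Con.sub {q : R} {s1 s2 : V →ₗ[R] V} {a b α β a' b' α' β' : V}
    (h : Con q s1 s2 a b α β) (h' : Con q s1 s2 a' b' α' β') :
    Con q s1 s2 (a - a') (b - b') (α - α') (β - β') := by
  constructor
  · rw [map_sub, h.ha, h'.ha, smul_sub]
  · rw [map_sub, h.hb, h'.hb, smul_sub]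
  · rw [map_sub, h.hα, h'.hα, smul_sub]
  · rw [map_sub, h.hβ, h'.hβ, smul_sub]
  · rw [map_sub, map_sub]
    linear_combination (norm := module) h.hc - h'.hc

namespace Su

variable {q qi k ki r ri : R} {s1 s2 P1 P2 : V →ₗ[R] V}

theorem core (h : Su q qi k ki r ri s1 s2 P1 P2) (θ : R) (hθ : θ = ki * (q * r - qi * ri))
    (h8 : IsUnit (q ^ 8 - 1)) (h2 : IsUnit (2 : R)) (h19 : IsUnit (19 : R))
    (Q : Submodule R (V × V × V × V))
    (hQ : ∀ a b α β, (a, b, α, β) ∈ Q → Con q s1 s2 a b α β)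
    (hG1 : ∀ v, s2 v = q • v →
      (P1 v, θ • v, (- (q * r)) • P1 v, P2 (s1 v) - k • P2 (P1 v)) ∈ Q)
    (hG2 : ∀ u, s1 u = q • u →
      (θ • u, P2 u, P1 (s2 u) - k • P1 (P2 u), (- (q * r)) • P2 u) ∈ Q)
    (hD : ∀ u, s1 u = q • u → (P1 (s2 u) - k • P1 (P2 u), (- (q * r)) • P2 u,
      θ • u + (q * r * k) • P1 (P2 u), ri • P2 u) ∈ Q)
    (hD' : ∀ v, s2 v = q • v → ((- (q * r)) • P1 v, P2 (s1 v) - k • P2 (P1 v),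
      ri • P1 v, θ • v + (q * r * k) • P2 (P1 v)) ∈ Q) :
    ∀ a b α β, Con q s1 s2 a b α β → (a, b, α, β) ∈ Q := by
  have hq := h.hq
  have hk := h.hk
  have hki := h.hki
  have hr := h.hr
  -- adding components
  have addQ : ∀ {a b c d a' b' c' d' : V}, (a, b, c, d) ∈ Q → (a', b', c', d') ∈ Q →
      (a + a', b + b', c + c', d + d') ∈ Q := fun x y => Q.add_mem x y
  have smulQ : ∀ (t : R) {a b c d : V}, (a, b, c, d) ∈ Q →
      (t • a, t • b, t • c, t • d) ∈ Q := fun t _ _ _ _ x => Q.smul_mem t x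
  have congQ : ∀ {a b c d a' b' c' d' : V}, (a, b, c, d) ∈ Q → a = a' → b = b' → c = c' →
      d = d' → (a', b', c', d') ∈ Q := by
    rintro a b c d a' b' c' d' hx rfl rfl rfl rfl
    exact hx
  let B : Submodule R V :=
    { carrier := {b | ∃ α β, ((0 : V), b, α, β) ∈ Q}
      add_mem' := by
        rintro x y ⟨α, β, hx⟩ ⟨α', β', hy⟩
        exact ⟨α + α', β + β', by simpa using addQ hx hy⟩
      zero_mem' := ⟨0, 0, Q.zero_mem⟩
      smul_mem' := by
        rintro t x ⟨α, β, hx⟩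
        exact ⟨t • α, t • β, by simpa using smulQ t hx⟩ }
  have memB : ∀ {a b c d : V}, (a, b, c, d) ∈ Q → a = 0 → b ∈ B := by
    rintro a b c d hx rfl
    exact ⟨c, d, hx⟩
  obtain ⟨T, hT⟩ : ∃ T, T = ki * (q ^ 2 * r ^ 2 - 1) := ⟨_, rfl⟩
  have hTθ : q * r * θ = T := by
    rw [hT, hθ]; linear_combination (-ki) * (r * ri * hq + hr)
  have hF : ∀ v, s2 v = q • v → T • v + P2 (s1 v) - k • P2 (P1 v) ∈ B := by
    intro v hv
    have := memB (addQ (hD' v hv) (smulQ (q * r) (hG1 v hv))) (by module)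
    convert this using 1
    rw [← hTθ]; module
  -- step A
  have hP2α : ∀ {a b α β}, Con q s1 s2 a b α β → P2 α = q • P2 a + β - P2 (s1 b) := by
    intro a b α β c
    have e := congrArg P2 c.hc
    rw [map_add, map_add, h.f2, h.swap.fix c.hβ] at e
    rw [e]; module
  have hv0 : ∀ {a b α β}, Con q s1 s2 a b α β →
      s2 (r • b - qi • β - k • P2 (s1 b)) = q • (r • b - qi • β - k • P2 (s1 b)) := by
    intro a b α β c
    rw [map_sub, map_sub, map_smul, map_smul, map_smul, c.hb, c.hβ, h.e2]
    module
  have stepA : ∀ {a b α β}, Con q s1 s2 a b α β →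
      P1 (s2 α) - k • P1 (P2 α) + P1 (r • b - qi • β - k • P2 (s1 b)) = a := by
    intro a b α β c
    have e : P1 (s2 α) = a + (q * k) • P1 (P2 a) + q • P1 β - r • P1 b := by
      have e := congrArg (fun z => P1 (s2 z)) c.hc
      simp only [map_add] at e
      rw [h.sq2, c.hβ, h.l1 c.hb, map_add, map_smul, map_smul, h.fix c.ha] at e
      rw [e]; module
    rw [e, hP2α c]
    simp only [map_add, map_sub, map_smul]
    rw [hk]; module
  -- the case a = b = 0
  have case0 : ∀ w, s1 w = q • w → s2 w = q • w → ((0 : V), (0 : V), w, w) ∈ Q := by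
    intro w h1 h2
    have p1 := h.fix h1
    have p2 := h.swap.fix h2
    have er : r • w = (q ^ 2) • w := by
      have e := h.d1 w
      simp only [h2, h1, map_smul] at e
      have e' := congrArg (fun z => (qi ^ 2) • z) e
      simp only [smul_smul] at e'
      have u2 : qi ^ 2 * (q ^ 2 * r) = r := by
        linear_combination r * (q * qi + 1) * hq
      have u3 : qi ^ 2 * (q * (q * (q * q))) = q ^ 2 := by
        linear_combination q ^ 2 * (q * qi + 1) * hq
      rw [u3, u2] at e'
      exact e'.symm
    have eri : ri • w = (qi ^ 2) • w := by
      have e' := congrArg (fun z => (ri * qi ^ 2) • z) er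
      simp only [smul_smul] at e'
      have u1 : ri * qi ^ 2 * q ^ 2 = ri := by
        linear_combination ri * (q * qi + 1) * hq
      have u2 : ri * qi ^ 2 * r = qi ^ 2 := by
        linear_combination qi ^ 2 * hr
      rw [u1, u2] at e'
      exact e'.symm
    obtain ⟨t, ht⟩ : ∃ t, t = q ^ 2 + 1 + qi ^ 2 := ⟨_, rfl⟩
    have eθ : θ • w = t • w := by
      have u : θ • w = (ki * q) • (r • w) - (ki * qi) • (ri • w) := by
        rw [hθ]; module
      rw [u, er, eri]
      match_scalars
      rw [ht]
      clear * - hq hk hki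
      linear_combination (q ^ 2 + 1 + qi ^ 2) * hki - ki * (q ^ 2 + 1 + qi ^ 2) * hk
        + ki * (q - qi) * hq
    have g1 : (w, t • w, (- q ^ 3) • w, qi • w) ∈ Q := by
      refine congQ (hG1 w h2) p1 eθ ?_ ?_
      · rw [p1]
        linear_combination (norm := module) (-q) • er
      · rw [p1, p2, h1, map_smul, p2, hk]; module
    have g2 : (t • w, w, qi • w, (- q ^ 3) • w) ∈ Q := by
      refine congQ (hG2 w h1) eθ p2 ?_ ?_
      · rw [p2, p1, h2, map_smul, p1, hk]; module
      · rw [p2]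
        linear_combination (norm := module) (-q) • er
    have g3 : (qi • w, (- q ^ 3) • w, (t + q ^ 3 * k) • w, (qi ^ 2) • w) ∈ Q := by
      refine congQ (hD w h1) ?_ ?_ ?_ ?_
      · rw [p2, p1, h2, map_smul, p1, hk]; module
      · rw [p2]
        linear_combination (norm := module) (-q) • er
      · rw [p2, p1]
        linear_combination (norm := module) eθ + (q * k) • er
      · rw [p2, eri]
    obtain ⟨z, hz⟩ := h8.exists_right_inv
    obtain ⟨y, hy⟩ : ∃ y, y = q ^ 3 + q + qi + qi ^ 3 := ⟨_, rfl⟩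
    obtain ⟨yi, hyi⟩ : ∃ yi, yi = z * q ^ 3 * (q ^ 2 - 1) := ⟨_, rfl⟩
    have yq : y * q ^ 3 = q ^ 6 + q ^ 4 + q ^ 2 + 1 := by
      rw [hy]; linear_combination (q ^ 2 + (q ^ 2 * qi ^ 2 + q * qi + 1)) * hq
    have yy : y * yi = 1 := by
      rw [hyi]; linear_combination z * (q ^ 2 - 1) * yq + hz
    have yt : q ^ 3 + t * qi = y := by
      rw [hy, ht]; linear_combination q * hq
    have y1 : (qi + t * q ^ 3) = q ^ 2 * y := by
      rw [hy, ht]; linear_combination (q * qi * q - qi * (q * qi + 1)) * hq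
    have y2 : t + q ^ 3 * k + q ^ 2 = q * y := by
      rw [hy, ht, hk]; linear_combination (- q ^ 2 - qi ^ 2 - 1) * hq
    have y3 : q ^ 2 * y + q * (1 - t ^ 2) = - y := by
      rw [hy, ht]; linear_combination
        (- q * (2 * (q * qi) + 1) + qi * (q * qi - 1) - qi ^ 3) * hq
    have m := smulQ (- yi ^ 2) (addQ (smulQ y (addQ g2 (smulQ (-t) g1)))
      (smulQ (1 - t ^ 2) (addQ g3 (smulQ (-qi) g1))))
    refine congQ m ?_ ?_ ?_ ?_
    · module
    · match_scalars
      linear_combination (- yi ^ 2) * (1 - t ^ 2) * (- yt)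
    · match_scalars
      linear_combination (- yi ^ 2) * (y * y1 + (1 - t ^ 2) * y2 + y * y3)
        + (y * yi + 1) * yy + yi ^ 2 * (t ^ 2 - 1) * q ^ 2 * hq
    · match_scalars
      linear_combination (yi ^ 2) * y * yt + (y * yi + 1) * yy
  -- the case a = 0
  have caseB : ∀ b α β, Con q s1 s2 0 b α β → b ∈ B := by
    intro b α β c
    have hc : β = s1 b + α := by simpa using c.hc
    have p2α : P2 α = β - P2 (s1 b) := by
      rw [hP2α c, map_zero, smul_zero, zero_add]
    have p1β : P1 β = q • P1 b + α := by
      rw [hc, map_add, h.f1, h.fix c.hα]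
    have hn : P2 (P1 β) = q • P2 (P1 b) + β - P2 (s1 b) := by
      rw [p1β, map_add, map_smul, p2α]; module
    have hS : P2 (s1 β) = b + (q * k) • P2 (P1 b) + q • β - q • P2 (s1 b) := by
      conv_lhs => rw [hc]
      rw [map_add, h.sq1, c.hα, map_add, map_add, map_smul, map_smul, p2α, h.swap.fix c.hb]
      module
    have fβ : (T + qi) • β + b - qi • P2 (s1 b) ∈ B := by
      convert hF β c.hβ using 1
      rw [hS, hn, hk]
      module
    refine h.elim θ hθ h8 h2 h19 B T hT hF b β c.hb c.hβ hn hS ?_ ?_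
    · have := memB (addQ (hD α c.hα) (hG1 _ (hv0 c))) (stepA c)
      convert B.add_mem this (B.smul_mem ri fβ) using 1
      rw [p2α]
      match_scalars
      · ring
      · rw [hT, hθ]
        linear_combination - (ki * q ^ 2 * r * hr - ki * r * hq + (q * r - qi * ri) * hki
          - (q * r - qi * ri) * ki * hk + ki * (r + ri) * hq)
      · rw [hθ]
        linear_combination (q * r - qi * ri) * hki
    · have m1 : s2 (θ • (β - q • b)) = q • (θ • (β - q • b)) := by
        rw [map_smul, map_sub, map_smul, c.hb, c.hβ]; module
      have := memB (addQ (hG2 α c.hα) (smulQ (-1) (hG1 _ m1))) (by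
        simp only [map_smul, map_sub, p1β]; module)
      convert B.sub_mem this (B.smul_mem q fβ) using 1
      rw [p2α]
      match_scalars
      · linear_combination (- q) * hTθ + hq
      · ring
      · linear_combination - hq
  intro a b α β c
  have m0 := addQ (hD α c.hα) (hG1 _ (hv0 c))
  rw [stepA c] at m0
  have c0 := c.sub (hQ _ _ _ _ m0)
  rw [sub_self] at c0
  obtain ⟨α', β', m1⟩ := caseB _ _ _ c0
  have c1 := c0.sub (hQ _ _ _ _ m1)
  simp only [sub_self] at c1
  have m2 := case0 _ c1.hα (by
    have := c1.hc
    simp only [map_zero, zero_add] at this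
    rw [← this]; exact c1.hβ)
  have e := c1.hc
  simp only [map_zero, zero_add] at e
  refine congQ (addQ (addQ m0 m1) m2) ?_ ?_ ?_ ?_
  · module
  · module
  · module
  · rw [← e]; module

end Su
end
end CubicB2

namespace CubicB2

section
variable {R V : Type*} [CommRing R] [AddCommGroup V] [Module R V]

section vec
variable (U : Submodule R (Fin 8 → V))

theorem addU {a b c d e f g h a' b' c' d' e' f' g' h' : V}
    (x : ![a, b, c, d, e, f, g, h] ∈ U) (y : ![a', b', c', d', e', f', g', h'] ∈ U) :
    ![a + a', b + b', c + c', d + d', e + e', f + f', g + g', h + h'] ∈ U := by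
  simpa using U.add_mem x y

theorem smulU (t : R) {a b c d e f g h : V}
    (x : ![a, b, c, d, e, f, g, h] ∈ U) :
    ![t • a, t • b, t • c, t • d, t • e, t • f, t • g, t • h] ∈ U := by
  simpa using U.smul_mem t x

theorem congU {a b c d e f g h a' b' c' d' e' f' g' h' : V}
    (x : ![a, b, c, d, e, f, g, h] ∈ U) (h0 : a = a') (h1 : b = b') (h2 : c = c') (h3 : d = d')
    (h4 : e = e') (h5 : f = f') (h6 : g = g') (h7 : h = h') :
    ![a', b', c', d', e', f', g', h'] ∈ U := by
  subst h0 h1 h2 h3 h4 h5 h6 h7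
  exact x

/-- dividing by an invertible scalar -/
theorem divU {t ti : R} (hti : t * ti = 1) {a b c d e f g h a' b' c' d' e' f' g' h' : V}
    (x : ![a, b, c, d, e, f, g, h] ∈ U) (h0 : a = t • a') (h1 : b = t • b') (h2 : c = t • c')
    (h3 : d = t • d') (h4 : e = t • e') (h5 : f = t • f') (h6 : g = t • g') (h7 : h = t • h') :
    ![a', b', c', d', e', f', g', h'] ∈ U := by
  have e : ∀ z : V, ti • t • z = z := fun z => by rw [smul_smul, mul_comm, hti, one_smul]
  subst h0 h1 h2 h3 h4 h5 h6 h7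
  exact congU U (smulU U ti x) (e _) (e _) (e _) (e _) (e _) (e _) (e _) (e _)

end vec

/-- `U` contains all the vectors `i_j(v)`, listed along the 8-cycle. -/
structure HI (q r : R) (s1 s2 : V →ₗ[R] V) (U : Submodule R (Fin 8 → V)) : Prop where
  I0 : ∀ v, ![v, s1 v, s2 (s1 v), s1 (s2 (s1 v)), (q ^ 2 * r) • v, s2 (s1 (s2 v)), s1 (s2 v),
    s2 v] ∈ U
  I1 : ∀ v, ![s1 v, v, s2 v, s1 (s2 v), s2 (s1 (s2 v)), (q ^ 2 * r) • v, s1 (s2 (s1 v)),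
    s2 (s1 v)] ∈ U
  I2 : ∀ v, ![s1 (s2 v), s2 v, v, s1 v, s2 (s1 v), s1 (s2 (s1 v)), (q ^ 2 * r) • v,
    s2 (s1 (s2 v))] ∈ U
  I3 : ∀ v, ![s1 (s2 (s1 v)), s2 (s1 v), s1 v, v, s2 v, s1 (s2 v), s2 (s1 (s2 v)),
    (q ^ 2 * r) • v] ∈ U
  I4 : ∀ v, ![(q ^ 2 * r) • v, s2 (s1 (s2 v)), s1 (s2 v), s2 v, v, s1 v, s2 (s1 v),
    s1 (s2 (s1 v))] ∈ U
  I5 : ∀ v, ![s2 (s1 (s2 v)), (q ^ 2 * r) • v, s1 (s2 (s1 v)), s2 (s1 v), s1 v, v, s2 v,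
    s1 (s2 v)] ∈ U
  I6 : ∀ v, ![s2 (s1 v), s1 (s2 (s1 v)), (q ^ 2 * r) • v, s2 (s1 (s2 v)), s1 (s2 v), s2 v, v,
    s1 v] ∈ U
  I7 : ∀ v, ![s2 v, s1 (s2 v), s2 (s1 (s2 v)), (q ^ 2 * r) • v, s1 (s2 (s1 v)), s2 (s1 v), s1 v,
    v] ∈ U

/-- reflection of the 8-cycle -/
def mir : (Fin 8 → V) →ₗ[R] (Fin 8 → V) := LinearMap.funLeft R V (fun i : Fin 8 => - i)

theorem mir_vec (a b c d e f g h : V) :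
    mir (R := R) ![a, b, c, d, e, f, g, h] = ![a, h, g, f, e, d, c, b] := by
  ext i
  fin_cases i <;> rfl

theorem HI.swap {q r : R} {s1 s2 : V →ₗ[R] V} {U : Submodule R (Fin 8 → V)}
    (h : HI q r s1 s2 U) : HI q r s2 s1 (U.comap mir) := by
  constructor <;> intro v <;> rw [Submodule.mem_comap, mir_vec]
  · exact h.I0 v
  · exact h.I7 v
  · exact h.I6 v
  · exact h.I5 v
  · exact h.I4 v
  · exact h.I3 v
  · exact h.I2 v
  · exact h.I1 v

namespace Su

variable {q qi k ki r ri : R} {s1 s2 P1 P2 : V →ₗ[R] V}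

theorem inv (h : Su q qi k ki r ri s1 s2 P1 P2) {x y : V} (e : s1 x = y) :
    x = s1 y - k • P1 y := by
  rw [← e, h.sq1, h.f1]; module

theorem cancelk (h : Su q qi k ki r ri s1 s2 P1 P2) {x y : V} (e : k • x = k • y) :
    x = y := by
  have h1 := h.hki
  have := congrArg (fun z => ki • z) e
  simp only [smul_smul] at this
  have e1 : ki * k = 1 := by linear_combination h1
  simpa [e1] using this

theorem J0 (h : Su q qi k ki r ri s1 s2 P1 P2) {v : V} (e : s2 v = q • v) :
    s1 (s2 (s1 v)) = (q * r) • v := by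
  apply h.cancelq
  have := h.d1 v
  rw [e] at this
  simp only [map_smul] at this
  rw [this]; module

theorem J (h : Su q qi k ki r ri s1 s2 P1 P2) {v : V} (e : s2 v = q • v) :
    s2 (s1 v) = (q * r) • s1 v - (q * r * k) • P1 v := by
  rw [h.inv (h.J0 e)]
  simp only [map_smul]; module

theorem J2 (h : Su q qi k ki r ri s1 s2 P1 P2) {v : V} (e : s2 v = q • v) :
    (qi * ri) • s1 v = s2 (s1 v) - k • s2 (P1 v) - k • P2 (s1 v) + (k * k) • P2 (P1 v) := by
  have a := h.swap.inv (h.J e)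
  simp only [map_sub, map_smul] at a
  have hq := h.hq
  have hr := h.hr
  have : q * r * (qi * ri) = 1 := by linear_combination r * ri * hq + hr
  have a := congrArg (fun z => (qi * ri) • z) a
  rw [a]
  match_scalars
  · linear_combination this
  · linear_combination (-k) * this
  · linear_combination (-k) * this
  · linear_combination (k * k) * this

theorem rel1 (h : Su q qi k ki r ri s1 s2 P1 P2) {θ : R} (hθ : k * θ = q * r - qi * ri)
    {v : V} (e : s2 v = q • v) :
    s2 (P1 v) + (P2 (s1 v) - k • P2 (P1 v)) = θ • s1 v - (q * r) • P1 v := by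
  apply h.cancelk
  have a := h.J2 e
  rw [h.J e] at a
  have t : (k * θ) • s1 v = (q * r - qi * ri) • s1 v := by rw [hθ]
  linear_combination (norm := module) a - t

theorem rel2 (h : Su q qi k ki r ri s1 s2 P1 P2) {θ : R} (hθ : k * θ = q * r - qi * ri)
    {u : V} (e : s1 u = q • u) :
    s2 (P1 (s2 u) - k • P1 (P2 u)) + ri • P2 u
      = θ • u - (q * r) • s1 (P2 u) + (q * r * k) • P1 (P2 u) := by
  apply h.cancelk
  have a := congrArg s2 (h.swap.J2 e)
  simp only [map_sub, map_add, map_smul] at a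
  rw [h.swap.J0 e, h.J (h.e2 u), h.sq2] at a
  have t : (k * θ) • u = (q * r - qi * ri) • u := by rw [hθ]
  have b : (qi * ri * (q * k)) • P2 u = (k * ri) • P2 u := by
    congr 1
    linear_combination k * ri * h.hq
  simp only [map_sub, map_smul]
  linear_combination (norm := module) a - t - b

theorem gen1 (h : Su q qi k ki r ri s1 s2 P1 P2) {θ : R} (hθ : k * θ = q * r - qi * ri)
    (U : Submodule R (Fin 8 → V)) (hU : HI q r s1 s2 U) {v : V} (e : s2 v = q • v) :
    ![0, 0, 0, P1 v, θ • s1 v - (q * r) • P1 v, θ • v, 0, 0] ∈ U := by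
  have hq := h.hq
  have hk := h.hk
  have hki := h.hki
  have hr := h.hr
  have j0 := h.J0 e
  have j := h.J e
  refine divU U (t := - q * k ^ 2) (ti := - qi * ki ^ 2)
    (by linear_combination k^2*ki^2 * hq + (k * ki + 1) * hki)
    (addU U (addU U (hU.I2 v) (smulU U (-q) (hU.I1 v)))
    (addU U (smulU U (-(qi * ri)) (hU.I5 v)) (smulU U ri (hU.I6 v)))) ?_ ?_ ?_ ?_ ?_ ?_ ?_ ?_
  all_goals simp only [e, j0, map_smul]
  all_goals try rw [j]
  all_goals match_scalars
  all_goals clear * - hq hk hki hr hθ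
  all_goals grind

theorem genD (h : Su q qi k ki r ri s1 s2 P1 P2) {θ : R} (hθ : k * θ = q * r - qi * ri)
    (U : Submodule R (Fin 8 → V)) (hU : HI q r s1 s2 U) {u : V} (e : s1 u = q • u) :
    ![0, 0, 0, P1 (s2 u) - k • P1 (P2 u),
      θ • u - (q * r) • s1 (P2 u) + (q * r * k) • P1 (P2 u), (- (q * r)) • P2 u, 0, 0] ∈ U := by
  have hq := h.hq
  have hk := h.hk
  have hki := h.hki
  have hr := h.hr
  have j0 := h.swap.J0 e
  have j := h.swap.J e
  have w := h.e2 u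
  have jw0 := h.J0 w
  have jw := h.J w
  have j2 := h.swap.J2 e
  rw [j] at j2
  refine divU U (t := - q * k ^ 2) (ti := - qi * ki ^ 2)
    (by linear_combination k^2*ki^2 * hq + (k * ki + 1) * hki)
    (addU U (addU U (hU.I1 u) (smulU U (-q) (hU.I0 u)))
    (addU U (smulU U (-(qi * ri)) (addU U (hU.I4 u) (smulU U (-q) (hU.I5 u))))
      (smulU U (-k) (addU U (hU.I2 (P2 u)) (smulU U (-q) (hU.I1 (P2 u))))))) ?_ ?_ ?_ ?_ ?_ ?_ ?_ ?_
  all_goals simp only [e, j0, w, jw0, map_smul]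
  all_goals try rw [j]
  all_goals try rw [jw]
  rotate_left 3
  · linear_combination (norm := skip) (q * k) • j2
    match_scalars <;> clear * - hq hk hki hr hθ <;> grind
  all_goals match_scalars
  all_goals clear * - hq hk hki hr hθ
  all_goals grind

end Su

/-- the edge condition `w - s z ∈ V_s` -/
def Ed (q : R) (s : V →ₗ[R] V) (z w : V) : Prop := s (w - s z) = q • (w - s z)

theorem Ed.fwd {q : R} {s : V →ₗ[R] V} {z w : V} (e : w = s z) : Ed q s z w := by
  rw [Ed, e, sub_self, map_zero, smul_zero]

theorem Ed.add {q : R} {s : V →ₗ[R] V} {z w z' w' : V} (h : Ed q s z w) (h' : Ed q s z' w') :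
    Ed q s (z + z') (w + w') := by
  unfold Ed at *
  simp only [map_sub, map_add] at *
  linear_combination (norm := module) h + h'

theorem Ed.smul {q : R} {s : V →ₗ[R] V} {z w : V} (t : R) (h : Ed q s z w) :
    Ed q s (t • z) (t • w) := by
  unfold Ed at *
  simp only [map_sub, map_smul] at *
  linear_combination (norm := module) t • h

theorem Su.bwd {q qi k ki r ri : R} {s1 s2 P1 P2 : V →ₗ[R] V}
    (h : Su q qi k ki r ri s1 s2 P1 P2) {z w : V} (e : z = s1 w) : Ed q s1 z w := by
  rw [Ed, e, h.sq1]
  simp only [map_sub, map_add, map_smul, h.e1]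
  module

theorem Su.sym {q qi k ki r ri : R} {s1 s2 P1 P2 : V →ₗ[R] V}
    (h : Su q qi k ki r ri s1 s2 P1 P2) {z w : V} (e : Ed q s1 z w) : Ed q s1 w z := by
  have a := congrArg s1 e
  unfold Ed at *
  simp only [map_sub, map_smul, h.sq1, map_add, h.e1] at *
  linear_combination (norm := module) - a

/-- the space `K` -/
def KS (q : R) (s1 s2 : V →ₗ[R] V) : Submodule R (Fin 8 → V) where
  carrier := {x | (Ed q s1 (x 0) (x 1) ∧ Ed q s2 (x 1) (x 2) ∧ Ed q s1 (x 2) (x 3) ∧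
    Ed q s2 (x 3) (x 4)) ∧ (Ed q s1 (x 4) (x 5) ∧ Ed q s2 (x 5) (x 6) ∧ Ed q s1 (x 6) (x 7) ∧
    Ed q s2 (x 7) (x 0))}
  add_mem' := by
    rintro x y ⟨⟨a0, a1, a2, a3⟩, a4, a5, a6, a7⟩ ⟨⟨b0, b1, b2, b3⟩, b4, b5, b6, b7⟩
    exact ⟨⟨a0.add b0, a1.add b1, a2.add b2, a3.add b3⟩, a4.add b4, a5.add b5, a6.add b6,
      a7.add b7⟩
  zero_mem' := by
    refine ⟨⟨?_, ?_, ?_, ?_⟩, ?_, ?_, ?_, ?_⟩ <;> exact Ed.fwd (by simp)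
  smul_mem' := by
    rintro t x ⟨⟨a0, a1, a2, a3⟩, a4, a5, a6, a7⟩
    exact ⟨⟨a0.smul t, a1.smul t, a2.smul t, a3.smul t⟩, a4.smul t, a5.smul t, a6.smul t,
      a7.smul t⟩

theorem Su.HIK {q qi k ki r ri : R} {s1 s2 P1 P2 : V →ₗ[R] V}
    (h : Su q qi k ki r ri s1 s2 P1 P2) : HI q r s1 s2 (KS q s1 s2) := by
  constructor <;> intro v <;> refine ⟨⟨?_, ?_, ?_, ?_⟩, ?_, ?_, ?_, ?_⟩
  all_goals first
    | exact Ed.fwd rfl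
    | exact h.bwd rfl
    | exact h.swap.bwd rfl
    | exact Ed.fwd (h.d1 _).symm
    | exact Ed.fwd (h.d2 _).symm
    | exact h.bwd (h.d1 _).symm
    | exact h.swap.bwd (h.d2 _).symm

theorem HI.inf {q r : R} {s1 s2 : V →ₗ[R] V} {U U' : Submodule R (Fin 8 → V)}
    (h : HI q r s1 s2 U) (h' : HI q r s1 s2 U') : HI q r s1 s2 (U ⊓ U') :=
  ⟨fun v => ⟨h.I0 v, h'.I0 v⟩, fun v => ⟨h.I1 v, h'.I1 v⟩, fun v => ⟨h.I2 v, h'.I2 v⟩,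
    fun v => ⟨h.I3 v, h'.I3 v⟩, fun v => ⟨h.I4 v, h'.I4 v⟩, fun v => ⟨h.I5 v, h'.I5 v⟩,
    fun v => ⟨h.I6 v, h'.I6 v⟩, fun v => ⟨h.I7 v, h'.I7 v⟩⟩

end
end CubicB2

namespace CubicB2

section
variable {R V : Type*} [CommRing R] [AddCommGroup V] [Module R V]
variable {q qi k ki r ri : R} {s1 s2 P1 P2 : V →ₗ[R] V}

theorem Su.genR1 (h : Su q qi k ki r ri s1 s2 P1 P2)
    (U : Submodule R (Fin 8 → V)) (hU : HI q r s1 s2 U) {u : V} (e : s1 u = q • u) :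
    ![0, u, s2 u, s1 (s2 u), (q * r) • u, 0, 0, 0] ∈ U := by
  have hq := h.hq
  have hk := h.hk
  have hki := h.hki
  have j0 := h.swap.J0 e
  refine divU U (t := - q * k) (ti := - qi * ki)
    (by linear_combination k * ki * hq + hki)
    (addU U (hU.I1 u) (smulU U (-q) (hU.I0 u))) ?_ ?_ ?_ ?_ ?_ ?_ ?_ ?_
  all_goals simp only [e, j0, map_smul]
  all_goals match_scalars
  all_goals clear * - hq hk
  all_goals grind

theorem Su.genR2 (h : Su q qi k ki r ri s1 s2 P1 P2)
    (U : Submodule R (Fin 8 → V)) (hU : HI q r s1 s2 U) {v : V} (e : s2 v = q • v) :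
    ![0, 0, v, s1 v, s2 (s1 v), (q * r) • v, 0, 0] ∈ U := by
  have hq := h.hq
  have hk := h.hk
  have hki := h.hki
  have j0 := h.J0 e
  refine divU U (t := - q * k) (ti := - qi * ki)
    (by linear_combination k * ki * hq + hki)
    (addU U (hU.I2 v) (smulU U (-q) (hU.I1 v))) ?_ ?_ ?_ ?_ ?_ ?_ ?_ ?_
  all_goals simp only [e, j0, map_smul]
  all_goals match_scalars
  all_goals clear * - hq hk
  all_goals grind

theorem Ed.zero {q : R} {s : V →ₗ[R] V} {w : V} (h : Ed q s 0 w) : s w = q • w := by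
  simpa [Ed] using h

theorem Su.main8 (h : Su q qi k ki r ri s1 s2 P1 P2)
    (h8 : IsUnit (q ^ 8 - 1)) (h2 : IsUnit (2 : R)) (h19 : IsUnit (19 : R))
    (U : Submodule R (Fin 8 → V)) (hU : HI q r s1 s2 U) (x : Fin 8 → V)
    (hx : x ∈ KS q s1 s2) : x ∈ U := by
  obtain ⟨θ, hθ⟩ : ∃ θ, θ = ki * (q * r - qi * ri) := ⟨_, rfl⟩
  have kθ : k * θ = q * r - qi * ri := by
    rw [hθ]; linear_combination (q * r - qi * ri) * h.hki
  obtain ⟨W, hW⟩ : ∃ W, W = U ⊓ KS q s1 s2 := ⟨_, rfl⟩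
  have hI : HI q r s1 s2 W := by rw [hW]; exact hU.inf h.HIK
  have WK : W ≤ KS q s1 s2 := by rw [hW]; exact inf_le_right
  suffices x ∈ W by
    rw [hW] at this
    exact this.1
  let Q : Submodule R (V × V × V × V) :=
    { carrier := {X | s2 X.1 + X.2.2.2 = s1 X.2.1 + X.2.2.1 ∧
        ![0, 0, 0, X.1, s2 X.1 + X.2.2.2, X.2.1, 0, 0] ∈ W}
      add_mem' := by
        rintro ⟨a, b, α, β⟩ ⟨a', b', α', β'⟩ ⟨e, m⟩ ⟨e', m'⟩
        refine ⟨?_, ?_⟩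
        · simp only [Prod.mk_add_mk, map_add] at *
          linear_combination (norm := module) e + e'
        · refine congU W (addU W m m') ?_ ?_ ?_ ?_ ?_ ?_ ?_ ?_ <;>
            (try simp only [Prod.mk_add_mk, map_add]) <;> module
      zero_mem' := by
        refine ⟨by simp, ?_⟩
        refine congU W (smulU W 0 (hI.I0 0)) ?_ ?_ ?_ ?_ ?_ ?_ ?_ ?_ <;> simp
      smul_mem' := by
        rintro t ⟨a, b, α, β⟩ ⟨e, m⟩
        refine ⟨?_, ?_⟩
        · simp only [Prod.smul_mk, map_smul] at *
          linear_combination (norm := module) t • e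
        · refine congU W (smulU W t m) ?_ ?_ ?_ ?_ ?_ ?_ ?_ ?_ <;>
            (try simp only [Prod.smul_mk, map_smul]) <;> module }
  have hcon : ∀ a c b, ![0, 0, 0, a, c, b, 0, 0] ∈ KS q s1 s2 →
      Con q s1 s2 a b (c - s1 b) (c - s2 a) := by
    rintro a c b ⟨⟨-, -, a2, a3⟩, a4, a5, -, -⟩
    have b5 := (h.swap.sym a5)
    have b4 := h.sym a4
    exact ⟨a2.zero, b5.zero, b4, a3, by module⟩
  have core := h.core θ hθ h8 h2 h19 Q
    (by
      rintro a b α β ⟨e, m⟩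
      have c := hcon _ _ _ (WK m)
      simp only at e c
      have e1 : s2 a + β - s1 b = α := by rw [e]; module
      have e2 : s2 a + β - s2 a = β := by module
      rwa [e1, e2] at c)
    (by
      intro v hv
      refine ⟨?_, ?_⟩
      · simp only
        rw [h.rel1 kθ hv, map_smul]; module
      · simp only
        rw [h.rel1 kθ hv]
        exact h.gen1 kθ W hI hv)
    (by
      intro u hu
      refine ⟨?_, ?_⟩
      · simp only
        rw [h.swap.rel1 kθ hu, map_smul]; module
      · have := h.swap.gen1 kθ _ hI.swap hu
        rw [Submodule.mem_comap, mir_vec] at this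
        refine congU W this rfl rfl rfl rfl ?_ rfl rfl rfl
        simp only [map_smul]; module)
    (by
      intro u hu
      refine ⟨?_, ?_⟩
      · simp only
        rw [h.rel2 kθ hu, map_smul]; module
      · simp only
        rw [h.rel2 kθ hu]
        exact h.genD kθ W hI hu)
    (by
      intro v hv
      refine ⟨?_, ?_⟩
      · simp only
        rw [h.swap.rel2 kθ hv, map_smul]; module
      · have := h.swap.genD kθ _ hI.swap hv
        rw [Submodule.mem_comap, mir_vec] at this
        refine congU W this rfl rfl rfl rfl ?_ rfl rfl rfl
        simp only [map_smul]; module)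
  have stage4 : ∀ a c b, ![0, 0, 0, a, c, b, 0, 0] ∈ KS q s1 s2 →
      ![0, 0, 0, a, c, b, 0, 0] ∈ W := by
    intro a c b m
    have := (core _ _ _ _ (hcon a c b m)).2
    refine congU W this rfl rfl rfl rfl ?_ rfl rfl rfl
    simp only; module
  have stage3 : ∀ x2 x3 x4 x5 x6, ![0, 0, x2, x3, x4, x5, x6, 0] ∈ KS q s1 s2 →
      ![0, 0, x2, x3, x4, x5, x6, 0] ∈ W := by
    intro x2 x3 x4 x5 x6 m
    obtain ⟨⟨-, a1, -, -⟩, -, -, a6, -⟩ := id m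
    have b6 := h.sym a6
    have m1 := h.genR2 W hI a1.zero
    have m2 := h.swap.genR2 _ hI.swap b6.zero
    rw [Submodule.mem_comap, mir_vec] at m2
    have m3 := addU W m1 m2
    have m4 := addU _ m (smulU _ (-1) (WK m3))
    have m5 := stage4 _ _ _ (congU _ m4 (by simp) (by simp) (by simp) rfl rfl rfl
      (by simp) (by simp))
    refine congU W (addU W m5 m3) ?_ ?_ ?_ ?_ ?_ ?_ ?_ ?_ <;> first | module | simp
  have stage2 : ∀ x1 x2 x3 x4 x5 x6 x7, ![0, x1, x2, x3, x4, x5, x6, x7] ∈ KS q s1 s2 →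
      ![0, x1, x2, x3, x4, x5, x6, x7] ∈ W := by
    intro x1 x2 x3 x4 x5 x6 x7 m
    obtain ⟨⟨a0, -, -, -⟩, -, -, -, a7⟩ := id m
    have b7 := h.swap.sym a7
    have m1 := h.genR1 W hI a0.zero
    have m2 := h.swap.genR1 _ hI.swap b7.zero
    rw [Submodule.mem_comap, mir_vec] at m2
    have m3 := addU W m1 m2
    have m4 := addU _ m (smulU _ (-1) (WK m3))
    have m5 := stage3 _ _ _ _ _ (congU _ m4 (by simp) (by simp) rfl rfl rfl rfl rfl (by simp))
    refine congU W (addU W m5 m3) ?_ ?_ ?_ ?_ ?_ ?_ ?_ ?_ <;> first | module | simp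
  have ex : x = ![x 0, x 1, x 2, x 3, x 4, x 5, x 6, x 7] := by
    ext i; fin_cases i <;> rfl
  rw [ex] at hx ⊢
  have m3 := hI.I0 (x 0)
  have m4 := addU _ hx (smulU _ (-1) (WK m3))
  have m5 := stage2 _ _ _ _ _ _ _ (congU _ m4 (by simp) rfl rfl rfl rfl rfl rfl rfl)
  refine congU W (addU W m5 m3) ?_ ?_ ?_ ?_ ?_ ?_ ?_ ?_ <;> first | module | simp

end
end CubicB2

namespace CubicB2

section tb
open DihedralGroup
variable {F V : Type*} [Field F] [AddCommGroup V] [Module F V] (s1 s2 : V →ₗ[F] V)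

theorem T0 {w : DihedralGroup 4} (h : w = r 0) (v : V) : v = TB2 s1 s2 w v := by
  subst h; unfold TB2
  rw [if_pos (by decide)]; rfl
theorem T1 {w : DihedralGroup 4} (h : w = sr 0) (v : V) : s1 v = TB2 s1 s2 w v := by
  subst h; unfold TB2
  rw [if_neg (by decide), if_pos (by decide)]
theorem T2 {w : DihedralGroup 4} (h : w = sr 1) (v : V) : s2 v = TB2 s1 s2 w v := by
  subst h; unfold TB2
  rw [if_neg (by decide), if_neg (by decide), if_pos (by decide)]
theorem T12 {w : DihedralGroup 4} (h : w = r 1) (v : V) : s1 (s2 v) = TB2 s1 s2 w v := by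
  subst h; unfold TB2
  rw [if_neg (by decide), if_neg (by decide), if_neg (by decide), if_pos (by decide)]; rfl
theorem T21 {w : DihedralGroup 4} (h : w = r 3) (v : V) : s2 (s1 v) = TB2 s1 s2 w v := by
  subst h; unfold TB2
  rw [if_neg (by decide), if_neg (by decide), if_neg (by decide), if_neg (by decide),
    if_pos (by decide)]; rfl
theorem T121 {w : DihedralGroup 4} (h : w = sr 3) (v : V) :
    s1 (s2 (s1 v)) = TB2 s1 s2 w v := by
  subst h; unfold TB2
  rw [if_neg (by decide), if_neg (by decide), if_neg (by decide), if_neg (by decide),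
    if_neg (by decide), if_pos (by decide)]; rfl
theorem T212 {w : DihedralGroup 4} (h : w = sr 2) (v : V) :
    s2 (s1 (s2 v)) = TB2 s1 s2 w v := by
  subst h; unfold TB2
  rw [if_neg (by decide), if_neg (by decide), if_neg (by decide), if_neg (by decide),
    if_neg (by decide), if_neg (by decide), if_pos (by decide)]; rfl
theorem T1212 {w : DihedralGroup 4} (h : w = r 2) (v : V) :
    s1 (s2 (s1 (s2 v))) = TB2 s1 s2 w v := by
  subst h; unfold TB2
  rw [if_neg (by decide), if_neg (by decide), if_neg (by decide), if_neg (by decide),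
    if_neg (by decide), if_neg (by decide), if_neg (by decide)]; rfl

/-- The elements of the dihedral group along the 8-cycle. -/
def pos : Fin 8 → DihedralGroup 4 := ![r 0, sr 0, r 3, sr 3, r 2, sr 2, r 1, sr 1]

theorem pos_surj (w : DihedralGroup 4) : ∃ i, pos i = w := by
  revert w; decide

theorem TB2_smul {R : Type*} [CommRing R] [Module R V]
    (h1 : ∀ (a : R) v, s1 (a • v) = a • s1 v) (h2 : ∀ (a : R) v, s2 (a • v) = a • s2 v)
    (w : DihedralGroup 4) (a : R) (v : V) : TB2 s1 s2 w (a • v) = a • TB2 s1 s2 w v := by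
  unfold TB2
  split_ifs <;> simp [h1, h2]

/-- The span of the images of the `i_y`, as an `R`-submodule. -/
def US {R : Type*} [CommRing R] [Module R V]
    (h1 : ∀ (a : R) v, s1 (a • v) = a • s1 v) (h2 : ∀ (a : R) v, s2 (a • v) = a • s2 v) :
    Submodule R (Fin 8 → V) where
  carrier := {x | ∃ v : DihedralGroup 4 → V,
    ∀ i, x i = ∑ y : DihedralGroup 4, TB2 s1 s2 (pos i * y⁻¹) (v y)}
  add_mem' := by
    rintro x y ⟨v, hv⟩ ⟨v', hv'⟩
    refine ⟨v + v', fun i => ?_⟩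
    simp [hv, hv', Finset.sum_add_distrib]
  zero_mem' := ⟨0, fun i => by simp⟩
  smul_mem' := by
    rintro t x ⟨v, hv⟩
    refine ⟨t • v, fun i => ?_⟩
    simp [hv, Finset.smul_sum, TB2_smul s1 s2 h1 h2]

theorem US_mem {R : Type*} [CommRing R] [Module R V]
    (h1 : ∀ (a : R) v, s1 (a • v) = a • s1 v) (h2 : ∀ (a : R) v, s2 (a • v) = a • s2 v)
    (j : Fin 8) (v : V) (x : Fin 8 → V) (hx : ∀ i, x i = TB2 s1 s2 (pos i * (pos j)⁻¹) v) :
    x ∈ US s1 s2 h1 h2 := by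
  refine ⟨Pi.single (pos j) v, fun i => ?_⟩
  rw [Finset.sum_eq_single (pos j)]
  · rw [Pi.single_eq_same, hx]
  · intro y _ hy
    rw [Pi.single_eq_of_ne hy, map_zero]
  · intro h
    exact absurd (Finset.mem_univ _) h

end tb

section gen
open DihedralGroup

theorem generic {V : Type*} [AddCommGroup V] [Module ℂ V]
    (q : ℂ) (hq : q ^ 8 ≠ 1) (hq0 : q ≠ 0)
    (s₁ s₂ : V →ₗ[ℂ] V)
    (hbraid : s₁ ∘ₗ s₂ ∘ₗ s₁ ∘ₗ s₂ = s₂ ∘ₗ s₁ ∘ₗ s₂ ∘ₗ s₁)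
    (hcub₁ : (s₁ - q • LinearMap.id) ∘ₗ (s₁ ∘ₗ s₁ - LinearMap.id) = 0)
    (hcub₂ : (s₂ - q • LinearMap.id) ∘ₗ (s₂ ∘ₗ s₂ - LinearMap.id) = 0)
    (x : DihedralGroup 4 → V)
    (hx₁ : ∀ w, x (DihedralGroup.sr 0 * w) - s₁ (x w) ∈
      LinearMap.range (s₁ ∘ₗ s₁ - LinearMap.id))
    (hx₂ : ∀ w, x (DihedralGroup.sr 1 * w) - s₂ (x w) ∈
      LinearMap.range (s₂ ∘ₗ s₂ - LinearMap.id))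
    (R : Type*) [CommRing R] [Algebra ℂ R] [Module R V] [IsScalarTower ℂ R V]
    (h1 : ∀ (a : R) v, s₁ (a • v) = a • s₁ v) (h2 : ∀ (a : R) v, s₂ (a • v) = a • s₂ v)
    (δ δi : R) (hδ : δ * δi = 1) (hd : ∀ v, s₁ (s₂ (s₁ (s₂ v))) = δ • v) :
    ∃ v : DihedralGroup 4 → V,
      ∀ w, x w = ∑ y : DihedralGroup 4, TB2 s₁ s₂ (w * y⁻¹) (v y) := by
  have hq2 : q ^ 2 - 1 ≠ 0 := by
    intro e
    apply hq
    linear_combination (q ^ 6 + q ^ 4 + q ^ 2 + 1) * e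
  let S1 : V →ₗ[R] V := { toFun := s₁, map_add' := s₁.map_add, map_smul' := h1 }
  let S2 : V →ₗ[R] V := { toFun := s₂, map_add' := s₂.map_add, map_smul' := h2 }
  have cub1 : ∀ v, s₁ (s₁ (s₁ v)) = q • s₁ (s₁ v) + s₁ v - q • v := by
    intro v
    have := LinearMap.congr_fun hcub₁ v
    simp at this
    linear_combination (norm := module) this
  have cub2 : ∀ v, s₂ (s₂ (s₂ v)) = q • s₂ (s₂ v) + s₂ v - q • v := by
    intro v
    have := LinearMap.congr_fun hcub₂ v
    simp at this
    linear_combination (norm := module) this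
  have hd' : ∀ v, s₂ (s₁ (s₂ (s₁ v))) = δ • v := by
    intro v
    rw [← hd]
    exact (LinearMap.congr_fun hbraid v).symm
  let a : ℂ →+* R := algebraMap ℂ R
  have asm : ∀ (c : ℂ) (v : V), a c • v = c • v := fun c v => algebraMap_smul R c v
  have hsu : Su (a q) (a q⁻¹) (a (q - q⁻¹)) (a ((q - q⁻¹)⁻¹)) (a (q⁻¹ ^ 2) * δ) (a (q ^ 2) * δi)
      S1 S2 (a ((q ^ 2 - 1)⁻¹) • (S1 ∘ₗ S1 - LinearMap.id))
      (a ((q ^ 2 - 1)⁻¹) • (S2 ∘ₗ S2 - LinearMap.id)) := by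
    have hk0 : q - q⁻¹ ≠ 0 := by
      intro e
      apply hq2
      field_simp at e
      linear_combination e
    have hqk : q * (q - q⁻¹) = q ^ 2 - 1 := by field_simp
    have e0 : (a q * a (q - q⁻¹)) * a ((q ^ 2 - 1)⁻¹) = 1 := by
      rw [← map_mul, ← map_mul, hqk, mul_inv_cancel₀ hq2, map_one]
    have e1 : a q ^ 2 * (a (q⁻¹ ^ 2) * δ) = δ := by
      rw [← mul_assoc, ← map_pow, ← map_mul]
      rw [← mul_pow, mul_inv_cancel₀ hq0, one_pow, map_one, one_mul]
    refine ⟨?_, ?_, ?_, ?_, ?_, ?_, ?_, ?_, ?_, ?_, ?_, ?_⟩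
    · rw [← map_mul, mul_inv_cancel₀ hq0, map_one]
    · rw [map_sub]
    · rw [← map_mul, mul_inv_cancel₀ hk0, map_one]
    · have : a (q⁻¹ ^ 2) * a (q ^ 2) = 1 := by
        rw [← map_mul, ← mul_pow, inv_mul_cancel₀ hq0, one_pow, map_one]
      linear_combination δ * δi * this + hδ
    · intro v
      rw [LinearMap.smul_apply, smul_smul, e0]
      simp [S1]
    · intro v
      rw [LinearMap.smul_apply, smul_smul, e0]
      simp [S2]
    · intro v
      rw [LinearMap.smul_apply, map_smul, smul_comm (a q)]
      congr 1
      simp only [LinearMap.sub_apply, LinearMap.comp_apply, LinearMap.id_apply, map_sub, asm]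
      change s₁ (s₁ (s₁ v)) - s₁ v = q • (s₁ (s₁ v) - v)
      rw [cub1]; module
    · intro v
      rw [LinearMap.smul_apply, map_smul, smul_comm (a q)]
      congr 1
      simp only [LinearMap.sub_apply, LinearMap.comp_apply, LinearMap.id_apply, map_sub, asm]
      change s₂ (s₂ (s₂ v)) - s₂ v = q • (s₂ (s₂ v) - v)
      rw [cub2]; module
    · intro v
      rw [LinearMap.smul_apply, LinearMap.smul_apply, smul_comm (a q)]
      congr 1
      simp only [LinearMap.sub_apply, LinearMap.comp_apply, LinearMap.id_apply, asm]
      change s₁ (s₁ (s₁ v)) - s₁ v = q • (s₁ (s₁ v) - v)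
      rw [cub1]; module
    · intro v
      rw [LinearMap.smul_apply, LinearMap.smul_apply, smul_comm (a q)]
      congr 1
      simp only [LinearMap.sub_apply, LinearMap.comp_apply, LinearMap.id_apply, asm]
      change s₂ (s₂ (s₂ v)) - s₂ v = q • (s₂ (s₂ v) - v)
      rw [cub2]; module
    · intro v
      rw [e1]; exact hd v
    · intro v
      rw [e1]; exact hd' v
  have e1 : a q ^ 2 * (a (q⁻¹ ^ 2) * δ) = δ := by
    rw [← mul_assoc, ← map_pow, ← map_mul]
    rw [← mul_pow, mul_inv_cancel₀ hq0, one_pow, map_one, one_mul]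
  have hI : HI (a q) (a (q⁻¹ ^ 2) * δ) S1 S2 (US s₁ s₂ h1 h2) := by
    constructor <;> intro v <;> rw [e1, ← hd v]
    · apply US_mem s₁ s₂ h1 h2 0 v
      intro i; fin_cases i
      all_goals first
        | exact T0 s₁ s₂ (by decide) _
        | exact T1 s₁ s₂ (by decide) _
        | exact T2 s₁ s₂ (by decide) _
        | exact T12 s₁ s₂ (by decide) _
        | exact T21 s₁ s₂ (by decide) _
        | exact T121 s₁ s₂ (by decide) _
        | exact T212 s₁ s₂ (by decide) _
        | exact T1212 s₁ s₂ (by decide) _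
    · apply US_mem s₁ s₂ h1 h2 1 v
      intro i; fin_cases i
      all_goals first
        | exact T0 s₁ s₂ (by decide) _
        | exact T1 s₁ s₂ (by decide) _
        | exact T2 s₁ s₂ (by decide) _
        | exact T12 s₁ s₂ (by decide) _
        | exact T21 s₁ s₂ (by decide) _
        | exact T121 s₁ s₂ (by decide) _
        | exact T212 s₁ s₂ (by decide) _
        | exact T1212 s₁ s₂ (by decide) _
    · apply US_mem s₁ s₂ h1 h2 2 v
      intro i; fin_cases i
      all_goals first
        | exact T0 s₁ s₂ (by decide) _
        | exact T1 s₁ s₂ (by decide) _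
        | exact T2 s₁ s₂ (by decide) _
        | exact T12 s₁ s₂ (by decide) _
        | exact T21 s₁ s₂ (by decide) _
        | exact T121 s₁ s₂ (by decide) _
        | exact T212 s₁ s₂ (by decide) _
        | exact T1212 s₁ s₂ (by decide) _
    · apply US_mem s₁ s₂ h1 h2 3 v
      intro i; fin_cases i
      all_goals first
        | exact T0 s₁ s₂ (by decide) _
        | exact T1 s₁ s₂ (by decide) _
        | exact T2 s₁ s₂ (by decide) _
        | exact T12 s₁ s₂ (by decide) _
        | exact T21 s₁ s₂ (by decide) _
        | exact T121 s₁ s₂ (by decide) _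
        | exact T212 s₁ s₂ (by decide) _
        | exact T1212 s₁ s₂ (by decide) _
    · apply US_mem s₁ s₂ h1 h2 4 v
      intro i; fin_cases i
      all_goals first
        | exact T0 s₁ s₂ (by decide) _
        | exact T1 s₁ s₂ (by decide) _
        | exact T2 s₁ s₂ (by decide) _
        | exact T12 s₁ s₂ (by decide) _
        | exact T21 s₁ s₂ (by decide) _
        | exact T121 s₁ s₂ (by decide) _
        | exact T212 s₁ s₂ (by decide) _
        | exact T1212 s₁ s₂ (by decide) _
    · apply US_mem s₁ s₂ h1 h2 5 v
      intro i; fin_cases i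
      all_goals first
        | exact T0 s₁ s₂ (by decide) _
        | exact T1 s₁ s₂ (by decide) _
        | exact T2 s₁ s₂ (by decide) _
        | exact T12 s₁ s₂ (by decide) _
        | exact T21 s₁ s₂ (by decide) _
        | exact T121 s₁ s₂ (by decide) _
        | exact T212 s₁ s₂ (by decide) _
        | exact T1212 s₁ s₂ (by decide) _
    · apply US_mem s₁ s₂ h1 h2 6 v
      intro i; fin_cases i
      all_goals first
        | exact T0 s₁ s₂ (by decide) _
        | exact T1 s₁ s₂ (by decide) _
        | exact T2 s₁ s₂ (by decide) _
        | exact T12 s₁ s₂ (by decide) _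
        | exact T21 s₁ s₂ (by decide) _
        | exact T121 s₁ s₂ (by decide) _
        | exact T212 s₁ s₂ (by decide) _
        | exact T1212 s₁ s₂ (by decide) _
    · apply US_mem s₁ s₂ h1 h2 7 v
      intro i; fin_cases i
      all_goals first
        | exact T0 s₁ s₂ (by decide) _
        | exact T1 s₁ s₂ (by decide) _
        | exact T2 s₁ s₂ (by decide) _
        | exact T12 s₁ s₂ (by decide) _
        | exact T21 s₁ s₂ (by decide) _
        | exact T121 s₁ s₂ (by decide) _
        | exact T212 s₁ s₂ (by decide) _
        | exact T1212 s₁ s₂ (by decide) _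
  have ed1 : ∀ z w, w - s₁ z ∈ LinearMap.range (s₁ ∘ₗ s₁ - LinearMap.id) → Ed (a q) S1 z w := by
    rintro z w ⟨u, hu⟩
    unfold Ed
    change s₁ (w - s₁ z) = a q • (w - s₁ z)
    rw [← hu, asm]
    simp [cub1]
    module
  have ed2 : ∀ z w, w - s₂ z ∈ LinearMap.range (s₂ ∘ₗ s₂ - LinearMap.id) → Ed (a q) S2 z w := by
    rintro z w ⟨u, hu⟩
    unfold Ed
    change s₂ (w - s₂ z) = a q • (w - s₂ z)
    rw [← hu, asm]
    simp [cub2]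
    module
  have hK : (fun i => x (pos i)) ∈ KS (a q) S1 S2 :=
    ⟨⟨ed1 _ _ (hx₁ (pos 0)), ed2 _ _ (hx₂ (pos 1)), ed1 _ _ (hx₁ (pos 2)),
      ed2 _ _ (hx₂ (pos 3))⟩, ed1 _ _ (hx₁ (pos 4)), ed2 _ _ (hx₂ (pos 5)),
      ed1 _ _ (hx₁ (pos 6)), ed2 _ _ (hx₂ (pos 7))⟩
  have h8 : IsUnit (a q ^ 8 - 1) := by
    have := (isUnit_iff_ne_zero.mpr (sub_ne_zero.mpr hq)).map a
    simpa using this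
  have u2 : IsUnit (2 : R) := by
    have := (isUnit_iff_ne_zero.mpr (two_ne_zero (α := ℂ))).map a
    rwa [map_ofNat] at this
  have u19 : IsUnit (19 : R) := by
    have := (isUnit_iff_ne_zero.mpr (show (19 : ℂ) ≠ 0 by norm_num)).map a
    rwa [map_ofNat] at this
  obtain ⟨v, hv⟩ := hsu.main8 h8 u2 u19 _ hI _ hK
  refine ⟨v, fun w => ?_⟩
  obtain ⟨i, rfl⟩ := pos_surj w
  exact hv i

end gen
end CubicB2

namespace CubicB2
open DihedralGroup

theorem zero_case {V : Type*} [AddCommGroup V] [Module ℂ V]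
    (q : ℂ) (hq0 : q = 0)
    (s₁ s₂ : V →ₗ[ℂ] V) (hs₁ : Function.Bijective s₁) (hs₂ : Function.Bijective s₂)
    (hcub₁ : (s₁ - q • LinearMap.id) ∘ₗ (s₁ ∘ₗ s₁ - LinearMap.id) = 0)
    (hcub₂ : (s₂ - q • LinearMap.id) ∘ₗ (s₂ ∘ₗ s₂ - LinearMap.id) = 0)
    (x : DihedralGroup 4 → V)
    (hx₁ : ∀ w, x (DihedralGroup.sr 0 * w) - s₁ (x w) ∈
      LinearMap.range (s₁ ∘ₗ s₁ - LinearMap.id))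
    (hx₂ : ∀ w, x (DihedralGroup.sr 1 * w) - s₂ (x w) ∈
      LinearMap.range (s₂ ∘ₗ s₂ - LinearMap.id)) :
    ∃ v : DihedralGroup 4 → V,
      ∀ w, x w = ∑ y : DihedralGroup 4, TB2 s₁ s₂ (w * y⁻¹) (v y) := by
  subst hq0
  have k1 : ∀ w, x (sr 0 * w) = s₁ (x w) := by
    intro w
    obtain ⟨u, hu⟩ := hx₁ w
    have h := LinearMap.congr_fun hcub₁ u
    rw [LinearMap.comp_apply, hu, zero_smul, sub_zero, LinearMap.zero_apply] at h
    exact sub_eq_zero.1 (hs₁.1 (h.trans (map_zero s₁).symm))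
  have k2 : ∀ w, x (sr 1 * w) = s₂ (x w) := by
    intro w
    obtain ⟨u, hu⟩ := hx₂ w
    have h := LinearMap.congr_fun hcub₂ u
    rw [LinearMap.comp_apply, hu, zero_smul, sub_zero, LinearMap.zero_apply] at h
    exact sub_eq_zero.1 (hs₂.1 (h.trans (map_zero s₂).symm))
  have a1 : x (sr 0) = s₁ (x (r 0)) := k1 (r 0)
  have a2 : x (sr 1) = s₂ (x (r 0)) := k2 (r 0)
  have a21 : x (r 3) = s₂ (x (sr 0)) := k2 (sr 0)
  have a12 : x (r 1) = s₁ (x (sr 1)) := k1 (sr 1)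
  have a121 : x (sr 3) = s₁ (x (r 3)) := k1 (r 3)
  have a212 : x (sr 2) = s₂ (x (r 1)) := k2 (r 1)
  have a1212 : x (r 2) = s₁ (x (sr 2)) := k1 (sr 2)
  have key : ∀ w, x w = TB2 s₁ s₂ (w * (r 0)⁻¹) (x (r 0)) := by
    intro w
    obtain ⟨i, rfl⟩ := pos_surj w
    fin_cases i
    · exact T0 s₁ s₂ (by decide) _
    · exact a1.trans (T1 s₁ s₂ (by decide) _)
    · refine Eq.trans ?_ (T21 s₁ s₂ (by decide) _)
      rw [← a1]; exact a21
    · refine Eq.trans ?_ (T121 s₁ s₂ (by decide) _)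
      rw [← a1, ← a21]; exact a121
    · refine Eq.trans ?_ (T1212 s₁ s₂ (by decide) _)
      rw [← a2, ← a12, ← a212]; exact a1212
    · refine Eq.trans ?_ (T212 s₁ s₂ (by decide) _)
      rw [← a2, ← a12]; exact a212
    · refine Eq.trans ?_ (T12 s₁ s₂ (by decide) _)
      rw [← a2]; exact a12
    · exact a2.trans (T2 s₁ s₂ (by decide) _)
  refine ⟨Pi.single (r 0) (x (r 0)), fun w => ?_⟩
  rw [Finset.sum_eq_single (r 0)]
  · rw [Pi.single_eq_same]; exact key w
  · intro y _ hy
    rw [Pi.single_eq_of_ne hy, map_zero]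
  · intro h
    exact absurd (Finset.mem_univ _) h

end CubicB2

/-- (Every representation of the cubic Hecke algebra of type `B₂` with
`q⁸ ≠ 1` is good.) If `(s₁s₂)² = (s₂s₁)²`, `(sᵢ − q)(sᵢ² − 1) = 0` and `q⁸ ≠ 1`, and if a
family `(x_w)_{w ∈ W}` indexed by the dihedral group `W` of order 8 satisfies
`x_{σᵢ, w} − sᵢ(x_w) ∈ range(sᵢ² − 1)` for `i = 1, 2`, then `x_w = Σ_y T(w y⁻¹)(v_y)` for
some vectors `v_y ∈ V`. -/
theorem stmt_15 {V : Type*} [AddCommGroup V] [Module ℂ V]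
    (q : ℂ) (hq : q ^ 8 ≠ 1)
    (s₁ s₂ : V →ₗ[ℂ] V) (hs₁ : Function.Bijective s₁) (hs₂ : Function.Bijective s₂)
    (hbraid : s₁ ∘ₗ s₂ ∘ₗ s₁ ∘ₗ s₂ = s₂ ∘ₗ s₁ ∘ₗ s₂ ∘ₗ s₁)
    (hcub₁ : (s₁ - q • LinearMap.id) ∘ₗ (s₁ ∘ₗ s₁ - LinearMap.id) = 0)
    (hcub₂ : (s₂ - q • LinearMap.id) ∘ₗ (s₂ ∘ₗ s₂ - LinearMap.id) = 0)
    (x : DihedralGroup 4 → V)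
    (hx₁ : ∀ w, x (DihedralGroup.sr 0 * w) - s₁ (x w) ∈
      LinearMap.range (s₁ ∘ₗ s₁ - LinearMap.id))
    (hx₂ : ∀ w, x (DihedralGroup.sr 1 * w) - s₂ (x w) ∈
      LinearMap.range (s₂ ∘ₗ s₂ - LinearMap.id)) :
    ∃ v : DihedralGroup 4 → V,
      ∀ w, x w = ∑ y : DihedralGroup 4, TB2 s₁ s₂ (w * y⁻¹) (v y) := by
  by_cases hq0 : q = 0
  · exact CubicB2.zero_case q hq0 s₁ s₂ hs₁ hs₂ hcub₁ hcub₂ x hx₁ hx₂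
  have hb : ∀ v, s₁ (s₂ (s₁ (s₂ v))) = s₂ (s₁ (s₂ (s₁ v))) := LinearMap.congr_fun hbraid
  let D : Module.End ℂ V := s₁ ∘ₗ s₂ ∘ₗ s₁ ∘ₗ s₂
  have hDb : Function.Bijective D := by
    simp only [D, LinearMap.coe_comp]
    exact hs₁.comp (hs₂.comp (hs₁.comp hs₂))
  let E := LinearEquiv.ofBijective D hDb
  let Di : Module.End ℂ V := E.symm.toLinearMap
  have hDi : ∀ v, D (Di v) = v := fun v => E.apply_symm_apply v
  have hDi' : ∀ v, Di (D v) = v := fun v => E.symm_apply_apply v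
  let A : Subalgebra ℂ (Module.End ℂ V) := Subalgebra.centralizer ℂ {s₁, s₂}
  have hA1 : ∀ f ∈ A, ∀ v, s₁ (f v) = f (s₁ v) := by
    intro f hf v
    have := (Subalgebra.mem_centralizer_iff ℂ).1 hf s₁ (by simp)
    exact LinearMap.congr_fun this v
  have hA2 : ∀ f ∈ A, ∀ v, s₂ (f v) = f (s₂ v) := by
    intro f hf v
    have := (Subalgebra.mem_centralizer_iff ℂ).1 hf s₂ (by simp)
    exact LinearMap.congr_fun this v
  have hAD : ∀ f ∈ A, ∀ v, D (f v) = f (D v) := by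
    intro f hf v
    simp only [D, LinearMap.comp_apply, hA1 f hf, hA2 f hf]
  have hADi : ∀ f ∈ A, ∀ v, Di (f v) = f (Di v) := by
    intro f hf v
    apply hDb.1
    rw [hDi, hAD f hf, hDi]
  have hD1 : ∀ v, s₁ (D v) = D (s₁ v) := by
    intro v
    simp only [D, LinearMap.comp_apply]
    rw [hb v]
  have hD2 : ∀ v, s₂ (D v) = D (s₂ v) := by
    intro v
    simp only [D, LinearMap.comp_apply]
    rw [← hb (s₂ v)]
  have hDA : D ∈ A := by
    refine (Subalgebra.mem_centralizer_iff ℂ).2 ?_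
    rintro g (rfl | rfl)
    · exact LinearMap.ext hD1
    · exact LinearMap.ext hD2
  have hDiA : Di ∈ A := by
    refine (Subalgebra.mem_centralizer_iff ℂ).2 ?_
    rintro g (rfl | rfl)
    · refine LinearMap.ext fun v => hDb.1 ?_
      change D (g (Di v)) = D (Di (g v))
      rw [← hD1, hDi, hDi]
    · refine LinearMap.ext fun v => hDb.1 ?_
      change D (g (Di v)) = D (Di (g v))
      rw [← hD2, hDi, hDi]
  have hDc : (⟨D, hDA⟩ : A) ∈ Subalgebra.center ℂ A := by
    rw [Subalgebra.mem_center_iff]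
    intro f
    exact Subtype.ext (LinearMap.ext fun v => (hAD f.1 f.2 v).symm)
  have hDic : (⟨Di, hDiA⟩ : A) ∈ Subalgebra.center ℂ A := by
    rw [Subalgebra.mem_center_iff]
    intro f
    exact Subtype.ext (LinearMap.ext fun v => (hADi f.1 f.2 v).symm)
  exact CubicB2.generic q hq hq0 s₁ s₂ hbraid hcub₁ hcub₂ x hx₁ hx₂ (Subalgebra.center ℂ A)
    (fun a v => hA1 a.1.1 a.1.2 v) (fun a v => hA2 a.1.1 a.1.2 v)
    ⟨⟨D, hDA⟩, hDc⟩ ⟨⟨Di, hDiA⟩, hDic⟩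
    (Subtype.ext (Subtype.ext (LinearMap.ext hDi))) (fun v => rfl)
end

section
/- Let S₃ denote the group of permutations of a three-element set, and for w ∈ S₃ let ℓ(w) be the number of inversions of w (pairs a < b with w(a) > w(b)); the lengths of the six elements are 0, 1, 1, 2, 2, 3. Let M be the 6 × 6 matrix with rows and columns indexed by S₃ and with entries in the ring ℤ[u, u⁻¹] of Laurent polynomials given by M_{w,w'} = (−u)^{ℓ(w' w⁻¹)}. Then the determinant of M is divisible in ℤ[u, u⁻¹] by the product (Σ_{w∈S₃} u^{ℓ(w)}) · (Σ_{w∈S₃} (−u)^{ℓ(w)}) = (1 + 2u + 2u² + u³)(1 − 2u + 2u² − u³). -/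
open LaurentPolynomial

/-- The number of inversions of a permutation of `Fin 3` (its Coxeter length). -/
def invNum (w : Equiv.Perm (Fin 3)) : ℕ :=
  (Finset.univ.filter fun p : Fin 3 × Fin 3 => p.1 < p.2 ∧ w p.2 < w p.1).card

/-- The `6 × 6` matrix over `ℤ[u,u⁻¹]` with entries `M_{w,w'} = (−u)^{ℓ(w' w⁻¹)}`,
rows and columns indexed by `S₃`. -/
noncomputable def KLmatrix :
    Matrix (Equiv.Perm (Fin 3)) (Equiv.Perm (Fin 3)) (LaurentPolynomial ℤ) :=
  fun w w' => (-(T 1 : LaurentPolynomial ℤ)) ^ invNum (w' * w⁻¹)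

def permList : Fin 6 → Equiv.Perm (Fin 3) :=
  ![1, Equiv.swap 0 1, Equiv.swap 1 2, Equiv.swap 0 1 * Equiv.swap 1 2,
    Equiv.swap 1 2 * Equiv.swap 0 1, Equiv.swap 0 2]

theorem permList_bij : Function.Bijective permList := by decide +kernel

noncomputable def permEquiv : Fin 6 ≃ Equiv.Perm (Fin 3) :=
  Equiv.ofBijective permList permList_bij

def lenTable : Fin 6 → Fin 6 → ℕ :=
  ![![0, 1, 1, 2, 2, 3], ![1, 0, 2, 3, 1, 2], ![1, 2, 0, 1, 3, 2], ![2, 3, 1, 0, 2, 1], ![2, 1, 3, 2, 0, 1], ![3, 2, 2, 1, 1, 0]]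

theorem lenTable_eq : ∀ i j, invNum (permList j * (permList i)⁻¹) = lenTable i j := by
  decide +kernel

theorem sum_inv {R : Type*} [CommRing R] (q : R) :
    ∑ w : Equiv.Perm (Fin 3), q ^ invNum w = 1 + 2 * q + 2 * q ^ 2 + q ^ 3 := by
  rw [← permEquiv.sum_comp]
  have h : ∀ i, invNum (permEquiv i) = ![0, 1, 1, 2, 2, 3] i := by
    change ∀ i, invNum (permList i) = ![0, 1, 1, 2, 2, 3] i
    decide +kernel
  simp only [h, Fin.sum_univ_succ]
  simp
  ring

set_option maxHeartbeats 4000000 in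
set_option maxRecDepth 100000 in
theorem det_table {R : Type*} [CommRing R] (q : R) :
    (Matrix.of fun i j => q ^ lenTable i j).det = (1 - q ^ 2) ^ 6 * (1 - q ^ 6) := by
  have h : (Matrix.of fun i j => q ^ lenTable i j) = !![1, q, q, q ^ 2, q ^ 2, q ^ 3; q, 1, q ^ 2, q ^ 3, q, q ^ 2; q, q ^ 2, 1, q, q ^ 3, q ^ 2; q ^ 2, q ^ 3, q, 1, q ^ 2, q; q ^ 2, q, q ^ 3, q ^ 2, 1, q; q ^ 3, q ^ 2, q ^ 2, q, q, 1] := by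
    ext i j
    fin_cases i <;> fin_cases j <;> simp [lenTable]
  rw [h]
  simp [Matrix.det_succ_row_zero, Fin.sum_univ_succ, Fin.succAbove]
  ring

/-- `det M` is divisible in `ℤ[u,u⁻¹]` by
`(Σ_{w ∈ S₃} u^{ℓ(w)}) · (Σ_{w ∈ S₃} (−u)^{ℓ(w)}) = (1+2u+2u²+u³)(1−2u+2u²−u³)`. -/
theorem stmt_16 :
    ((∑ w : Equiv.Perm (Fin 3), (T 1 : LaurentPolynomial ℤ) ^ invNum w) *
        (∑ w : Equiv.Perm (Fin 3), (-(T 1 : LaurentPolynomial ℤ)) ^ invNum w)) ∣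
      KLmatrix.det := by
  have hd : KLmatrix.det = (1 - (-(T 1 : LaurentPolynomial ℤ)) ^ 2) ^ 6 *
      (1 - (-(T 1 : LaurentPolynomial ℤ)) ^ 6) := by
    rw [← det_table, ← Matrix.det_submatrix_equiv_self permEquiv]
    congr 1
    ext1 i j
    change (-(T 1 : LaurentPolynomial ℤ)) ^ invNum (permList j * (permList i)⁻¹) = _
    rw [lenTable_eq]
    rfl
  rw [hd, sum_inv, sum_inv]
  exact ⟨(1 - (T 1 : LaurentPolynomial ℤ) ^ 2) ^ 6, by ring⟩
end

section
/- Let S₃ denote the group of permutations of a three-element set, and for w ∈ S₃ let ℓ(w) be the number of inversions of w (pairs a < b with w(a) > w(b)). Let M be the 6 × 6 matrix with rows and columns indexed by S₃ and with entries in the ring ℤ[u, u⁻¹] of Laurent polynomials given by M_{w,w'} = (−u)^{ℓ(w' w⁻¹)}, and let p(u) = (1 − u²)(1 − u³) (the Poincaré polynomial of SL₃). Then there is no 6 × 6 matrix E with entries in ℤ[u, u⁻¹] such that M · E = p(u) · I, where I is the identity matrix. (Indeed, det M vanishes at a primitive 6th root of unity while p(u) does not; this underlies the counterexample showing that the Kazhdan–Laumon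 glued category for SL₃ has infinite cohomological dimension.) -/
open LaurentPolynomial

/-- There is no `6 × 6` matrix `E` over `ℤ[u,u⁻¹]` with
`M · E = (1 − u²)(1 − u³) · I`, where `p(u) = (1 − u²)(1 − u³)` is the Poincaré polynomial
of `SL₃`. -/
theorem stmt_17 :
    ¬ ∃ E : Matrix (Equiv.Perm (Fin 3)) (Equiv.Perm (Fin 3)) (LaurentPolynomial ℤ),
      KLmatrix * E =
        ((1 - (T 2 : LaurentPolynomial ℤ)) * (1 - (T 3 : LaurentPolynomial ℤ))) •
          (1 : Matrix (Equiv.Perm (Fin 3)) (Equiv.Perm (Fin 3)) (LaurentPolynomial ℤ)) := by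
  rintro ⟨E, h⟩
  have h7 : (3 : ZMod 7) * 5 = 1 := by decide
  have h7' : (5 : ZMod 7) * 3 = 1 := by decide
  let x : (ZMod 7)ˣ := ⟨3, 5, h7, h7'⟩
  let φ : LaurentPolynomial ℤ →+* ZMod 7 := LaurentPolynomial.eval₂ (Int.castRingHom (ZMod 7)) x
  have hT (n : ℕ) : φ (T (n : ℤ)) = 3 ^ n := LaurentPolynomial.eval₂_T_n _ x n
  have h1 : φ (T 1) = 3 := by simpa using hT 1
  have h2 : φ (T 2) = 3 ^ 2 := hT 2
  have h3 : φ (T 3) = 3 ^ 3 := hT 3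
  have key : ∀ w' : Equiv.Perm (Fin 3),
      ∑ w : Equiv.Perm (Fin 3), (-3 : ZMod 7) ^ invNum (w' * w⁻¹) = 0 := by
    decide
  have hs : ∑ w, φ ((KLmatrix * E) w 1) = 0 := by
    simp only [Matrix.mul_apply, map_sum, map_mul]
    rw [Finset.sum_comm]
    refine Finset.sum_eq_zero fun w' _ => ?_
    rw [← Finset.sum_mul]
    simp only [KLmatrix, map_pow, map_neg, h1]
    rw [key, zero_mul]
  rw [h] at hs
  simp only [Matrix.smul_apply, Matrix.one_apply, smul_eq_mul, mul_ite, mul_one, mul_zero,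
    apply_ite φ, map_zero, Finset.sum_ite_eq', Finset.mem_univ, if_true,
    map_mul, map_sub, map_one, h2, h3] at hs
  revert hs
  decide
end
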